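/- arXiv:2605.17136 — 7 statements merged into one kernel-verified Lean document; each statement's English description precedes it below -/
import Mathlib

section
/- Let m ≥ n ≥ 2 with (m,n) ≠ (2,2), and let μ be a probability distribution on [n]^m supported exactly on Surj_{m,n} (positive on every surjective vector, zero elsewhere) which is invariant under every permutation π of [n] acting by (x_1,…,x_m) ↦ (π(x_1),…,π(x_m)). Then there exists ε₀ > 0 (depending on m, n, μ) such that for every ε with 0 < ε < ε₀ there exists δ > 0 such that for every p the following holds: if f_1,…,f_m : [n]^p → [n] satisfy Pr_{x^(1),…,x^(p) i.i.d. ∼ μ}[(f_1(x^(1)_1,…,x^(p)_1),…,f_m(x^(1)_m,…,x^(p)_m)) ∈ Surj_{m,n}] ≥ 1 − δ, and moreover for every i ∈ [m] and c ∈ [n] we have Pr_{x uniform on [n]^p}[f_i(x) = c] < 1 − ε, then there exist k ∈ [p] and a permutation π of [n] such that for all i ∈ [m], Pr_{x uniform on [n]^p}[f_i(x) = π(x_k)] ≥ 1 − ε. -/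
/-- Probability of an event under the uniform distribution on a finite type. -/
noncomputable def unifPr {α : Type*} [Fintype α] (P : α → Prop) : ℝ :=
  (Nat.card {a : α // P a} : ℝ) / Fintype.card α

open scoped Classical in
/-- Probability of an event for `p` i.i.d. samples from the distribution `μ`
(given by its probability mass function) on a finite type. -/
noncomputable def prodPr {α : Type*} [Fintype α] (μ : α → ℝ) (p : ℕ)
    (P : (Fin p → α) → Prop) : ℝ :=
  ∑ x : Fin p → α, if P x then ∏ k, μ (x k) else 0

/-!
Let `influence f R` be the probability that `f` changes when the coordinates in `R` are resampled.
If no `f e` is nearly constant and a block `R` influences `f l` while its complement influences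
`f i`, for some `i ≠ l`, then the defect is bounded below.

* For `m > n`, fix `n - 1` objects `J` avoiding `i` and `l`, and let the pivot of a coordinate be
  `i` on `R` and `l` off `R`. In each coordinate draw `n` samples of `μ` sharing their values at `J`
  and at the pivot. Whatever the pivot is, `J` can be filled with the other `n - 1` categories, so
  the remaining entries can be exchanged freely, and a reverse hypercontractive inequality bounds
  below the probability that, for all `e ∉ J` and all `b`, the `b`-th copy of `f e` avoids `b`. The
  shared aggregates at `J` all miss some `b`, and the `b`-th copy is then not surjective.
* For `m = n`, the aggregates of a surjective profile sum to a constant in the free abelian group on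
  the categories. Exchanging the objects `l` and `j` on `R` preserves the law, so the increments of
  `f l` and `f j` agree up to twice the defect. As `n ≥ 3`, couplings through a third category make
  the base points independent, and a nonzero increment determines its two values.

Hence of any block and its complement one has small influence on all `f i`, and a minimal block
whose complement does is a singleton `{k}`. Maps `φ i` of the `k`-th vote that are non-constant and
preserve surjectivity all equal one permutation.
-/

section Ind

open scoped Classical in
/-- The indicator of a proposition; probabilities are written as means of indicators. -/
noncomputable def ind (P : Prop) : ℝ := if P then 1 else 0

variable {P Q R : Prop}

lemma ind_of_true (h : P) : ind P = 1 := if_pos h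

lemma ind_of_false (h : ¬P) : ind P = 0 := if_neg h

lemma ind_nonneg (P : Prop) : 0 ≤ ind P := by unfold ind; split_ifs <;> norm_num

lemma ind_le_one (P : Prop) : ind P ≤ 1 := by unfold ind; split_ifs <;> norm_num

lemma ind_not (P : Prop) : ind (¬P) = 1 - ind P := by unfold ind; split_ifs <;> simp_all

lemma ind_mono (h : P → Q) : ind P ≤ ind Q := by
  by_cases hP : P
  · rw [ind_of_true hP, ind_of_true (h hP)]
  · exact (ind_of_false hP).trans_le (ind_nonneg Q)

lemma ind_le_add (h : P → Q ∨ R) : ind P ≤ ind Q + ind R := by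
  by_cases hP : P
  · rcases h hP with hQ | hR
    · linarith [ind_le_one P, ind_of_true hQ, ind_nonneg R]
    · linarith [ind_le_one P, ind_of_true hR, ind_nonneg Q]
  · linarith [ind_of_false hP, ind_nonneg Q, ind_nonneg R]

lemma ind_pow (P : Prop) {k : ℕ} (hk : k ≠ 0) : ind P ^ k = ind P := by
  by_cases hP : P
  · rw [ind_of_true hP, one_pow]
  · rw [ind_of_false hP, zero_pow hk]

lemma ind_mul (P Q : Prop) : ind P * ind Q = ind (P ∧ Q) := by
  by_cases hP : P <;> by_cases hQ : Q <;> simp [ind, hP, hQ]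

lemma prod_ind {E : Type*} (s : Finset E) (P : E → Prop) :
    ∏ e ∈ s, ind (P e) = ind (∀ e ∈ s, P e) := by
  by_cases h : ∀ e ∈ s, P e
  · rw [ind_of_true h, Finset.prod_eq_one fun e he => ind_of_true (h e he)]
  · obtain ⟨e, he, hPe⟩ : ∃ e ∈ s, ¬P e := by simpa using h
    rw [ind_of_false h, Finset.prod_eq_zero he (ind_of_false hPe)]

lemma ind_exists_le_sum {E : Type*} [Fintype E] (P : E → Prop) :
    ind (∃ e, P e) ≤ ∑ e, ind (P e) := by
  by_cases h : ∃ e, P e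
  · obtain ⟨e, he⟩ := h
    exact (ind_mono fun _ => he).trans
      (Finset.single_le_sum (fun e _ => ind_nonneg (P e)) (Finset.mem_univ e))
  · exact (ind_of_false h).trans_le (Finset.sum_nonneg fun e _ => ind_nonneg (P e))

end Ind

section Mean

variable {Z Y : Type*} [Fintype Z] [Fintype Y]

/-- The mean of `F` under a probability mass function `μ`. Probability mass functions are real
functions in `stdSimplex ℝ Z`. -/
noncomputable def mean (μ F : Z → ℝ) : ℝ := ∑ z, μ z * F z

variable (μ : Z → ℝ) (ν : Y → ℝ)

lemma mean_add (F G : Z → ℝ) : mean μ (fun z => F z + G z) = mean μ F + mean μ G := by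
  simp only [mean, mul_add, Finset.sum_add_distrib]

lemma mean_sub (F G : Z → ℝ) : mean μ (fun z => F z - G z) = mean μ F - mean μ G := by
  simp only [mean, mul_sub, Finset.sum_sub_distrib]

lemma mean_const_mul (c : ℝ) (F : Z → ℝ) : mean μ (fun z => c * F z) = c * mean μ F := by
  simp only [mean, Finset.mul_sum, mul_left_comm]

lemma mean_mul_const (F : Z → ℝ) (c : ℝ) : mean μ (fun z => F z * c) = mean μ F * c := by
  simp only [mean, Finset.sum_mul, mul_assoc]

lemma mean_sum {E : Type*} (s : Finset E) (F : E → Z → ℝ) :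
    mean μ (fun z => ∑ e ∈ s, F e z) = ∑ e ∈ s, mean μ (F e) := by
  simp only [mean, Finset.mul_sum]
  exact Finset.sum_comm

lemma mean_comm (F : Z → Y → ℝ) :
    mean μ (fun z => mean ν fun y => F z y) = mean ν fun y => mean μ fun z => F z y := by
  simp only [mean, Finset.mul_sum, mul_left_comm]
  exact Finset.sum_comm

variable {μ} {F G : Z → ℝ} {c : ℝ} (hμ : μ ∈ stdSimplex ℝ Z)
include hμ

lemma mean_const (c : ℝ) : mean μ (fun _ => c) = c := by
  rw [mean, ← Finset.sum_mul, hμ.2, one_mul]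

lemma mean_mono_of_pos (h : ∀ z, 0 < μ z → F z ≤ G z) : mean μ F ≤ mean μ G := by
  refine Finset.sum_le_sum fun z _ => ?_
  rcases (hμ.1 z).eq_or_lt with hz | hz
  · simp [← hz]
  · exact mul_le_mul_of_nonneg_left (h z hz) hz.le

lemma mean_mono (h : ∀ z, F z ≤ G z) : mean μ F ≤ mean μ G :=
  mean_mono_of_pos hμ fun z _ => h z

lemma mean_nonneg (h : ∀ z, 0 ≤ F z) : 0 ≤ mean μ F :=
  (mean_const hμ 0).symm.trans_le (mean_mono hμ h)

lemma exists_pos_of_mem_stdSimplex : ∃ z, 0 < μ z := by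
  by_contra! h0
  exact one_ne_zero (hμ.2.symm.trans (Finset.sum_eq_zero fun z _ => (h0 z).antisymm (hμ.1 z)))

lemma exists_le_of_mean_le (h : mean μ F ≤ c) : ∃ z, F z ≤ c := by
  by_contra! hc
  obtain ⟨z, hz⟩ := exists_pos_of_mem_stdSimplex hμ
  have hlt : mean μ (fun _ => c) < mean μ F :=
    Finset.sum_lt_sum (fun w _ => mul_le_mul_of_nonneg_left (hc w).le (hμ.1 w))
      ⟨z, Finset.mem_univ z, mul_lt_mul_of_pos_left (hc z) hz⟩
  rw [mean_const hμ] at hlt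
  exact hlt.not_ge h

lemma mul_le_mean_of_le {z₀ : Z} (hc : 0 < c) (hz₀ : c ≤ μ z₀) (hF : ∀ z, 0 < μ z → 0 ≤ F z) :
    c * F z₀ ≤ mean μ F :=
  calc c * F z₀ ≤ μ z₀ * F z₀ :=
        mul_le_mul_of_nonneg_right hz₀ (hF z₀ (hc.trans_le hz₀))
    _ ≤ mean μ F := Finset.single_le_sum (f := fun z => μ z * F z) (fun z _ => by
        rcases (hμ.1 z).eq_or_lt with hz | hz
        · simp [← hz]
        · exact mul_nonneg hz.le (hF z hz)) (Finset.mem_univ z₀)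

lemma pow_mean_le (hF : ∀ z, 0 ≤ F z) (N : ℕ) : mean μ F ^ N ≤ mean μ fun z => F z ^ N :=
  Real.pow_arith_mean_le_arith_mean_pow Finset.univ μ F (fun z _ => hμ.1 z) hμ.2
    (fun z _ => hF z) N

end Mean

section Laws

variable {ι Z Y W : Type*} [Fintype ι] [Fintype Z] [Fintype Y] [Fintype W]

/-- The uniform law on a finite set. -/
noncomputable def uniformOn (T : Finset Y) (y : Y) : ℝ := ind (y ∈ T) / T.card

lemma uniformOn_mem_stdSimplex {T : Finset Y} (hT : T.Nonempty) :
    uniformOn T ∈ stdSimplex ℝ Y := by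
  refine ⟨fun y => div_nonneg (ind_nonneg _) (Nat.cast_nonneg _), ?_⟩
  have hcard : (T.card : ℝ) ≠ 0 := Nat.cast_ne_zero.2 hT.card_pos.ne'
  simp [uniformOn, ind, ← Finset.sum_div, hcard]

/-- The law of independent coordinates, the `k`-th one of law `ρ k`. -/
noncomputable def piLaw (ρ : ι → Z → ℝ) (z : ι → Z) : ℝ := ∏ k, ρ k (z k)

/-- The law of a pair whose first entry `z` has law `μ` and whose second entry has conditional law
`κ z`. -/
noncomputable def compProd (μ : Z → ℝ) (κ : Z → Y → ℝ) (w : Z × Y) : ℝ := μ w.1 * κ w.1 w.2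

lemma mean_compProd (μ : Z → ℝ) (κ : Z → Y → ℝ) (F : Z × Y → ℝ) :
    mean (compProd μ κ) F = mean μ fun z => mean (κ z) fun y => F (z, y) := by
  simp only [mean, compProd, Fintype.sum_prod_type, Finset.mul_sum, mul_assoc]

lemma compProd_mem_stdSimplex {μ : Z → ℝ} {κ : Z → Y → ℝ} (hμ : μ ∈ stdSimplex ℝ Z)
    (hκ₀ : ∀ z y, 0 ≤ κ z y) (hκ : ∀ z, 0 < μ z → κ z ∈ stdSimplex ℝ Y) :
    compProd μ κ ∈ stdSimplex ℝ (Z × Y) := by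
  refine ⟨fun w => mul_nonneg (hμ.1 _) (hκ₀ _ _), ?_⟩
  calc ∑ w, compProd μ κ w = mean (compProd μ κ) fun _ => 1 := by simp only [mean, mul_one]
    _ = mean μ fun z => mean (κ z) fun _ => 1 := mean_compProd μ κ _
    _ = mean μ fun _ => 1 :=
      le_antisymm (mean_mono_of_pos hμ fun z hz => (mean_const (hκ z hz) 1).le)
        (mean_mono_of_pos hμ fun z hz => (mean_const (hκ z hz) 1).ge)
    _ = 1 := mean_const hμ 1

lemma mean_piLaw_compProd_const [DecidableEq ι] (ρ : ι → Z → ℝ) (σ : ι → Y → ℝ)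
    (F : (ι → Z × Y) → ℝ) :
    mean (piLaw fun k => compProd (ρ k) fun _ => σ k) F =
      mean (piLaw ρ) fun z => mean (piLaw σ) fun y => F fun k => (z k, y k) := by
  rw [← mean_compProd (piLaw ρ) (fun _ => piLaw σ) fun w => F fun k => (w.1 k, w.2 k)]
  refine Fintype.sum_equiv (Equiv.arrowProdEquivProdArrow ι _ _) _ _ fun w => ?_
  simp only [piLaw, compProd, Finset.prod_mul_distrib, Equiv.arrowProdEquivProdArrow_apply]

lemma mean_piLaw_prod [DecidableEq ι] (ρ F : ι → Z → ℝ) :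
    mean (piLaw ρ) (fun z => ∏ k, F k (z k)) = ∏ k, mean (ρ k) (F k) := by
  simp only [mean, piLaw, ← Finset.prod_mul_distrib, Fintype.prod_sum]

lemma piLaw_mem_stdSimplex [DecidableEq ι] {ρ : ι → Z → ℝ} (hρ : ∀ k, ρ k ∈ stdSimplex ℝ Z) :
    piLaw ρ ∈ stdSimplex ℝ (ι → Z) := by
  refine ⟨fun z => Finset.prod_nonneg fun k _ => (hρ k).1 _, ?_⟩
  simp only [piLaw, ← Fintype.prod_sum, (hρ _).2, Finset.prod_const_one]

omit [Fintype Z] in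
lemma pos_of_piLaw_pos {ρ : ι → Z → ℝ} (hρ : ∀ k z, 0 ≤ ρ k z) {z : ι → Z}
    (hz : 0 < piLaw ρ z) (k : ι) : 0 < ρ k (z k) :=
  (hρ k _).lt_of_ne' fun h => hz.ne' (Finset.prod_eq_zero (Finset.mem_univ k) h)

/-- `φ` pushes the law `μ` forward to the law `ν`. -/
def LawPreserving (φ : Z → Y) (μ : Z → ℝ) (ν : Y → ℝ) : Prop :=
  ∀ g : Y → ℝ, mean μ (fun z => g (φ z)) = mean ν g

lemma LawPreserving.comp {φ : Z → Y} {ψ : Y → W} {μ : Z → ℝ} {ν : Y → ℝ} {τ : W → ℝ}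
    (hψ : LawPreserving ψ ν τ) (hφ : LawPreserving φ μ ν) :
    LawPreserving (fun z => ψ (φ z)) μ τ :=
  fun g => (hφ fun y => g (ψ y)).trans (hψ g)

lemma lawPreserving_fst_compProd {μ : Z → ℝ} {κ : Z → Y → ℝ} (hμ : μ ∈ stdSimplex ℝ Z)
    (hκ : ∀ z, 0 < μ z → κ z ∈ stdSimplex ℝ Y) : LawPreserving Prod.fst (compProd μ κ) μ := by
  intro g
  rw [mean_compProd]
  exact le_antisymm (mean_mono_of_pos hμ fun z hz => (mean_const (hκ z hz) (g z)).le)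
    (mean_mono_of_pos hμ fun z hz => (mean_const (hκ z hz) (g z)).ge)

lemma LawPreserving.mean_ind_eq {φ : Z → Y} {μ : Z → ℝ} {ν : Y → ℝ}
    (h : LawPreserving φ μ ν) (y : Y) : mean μ (fun z => ind (φ z = y)) = ν y := by
  classical
  rw [h fun y' => ind (y' = y)]
  simp [mean, ind]

lemma lawPreserving_of_mean_ind_eq {φ : Z → Y} {μ : Z → ℝ} {ν : Y → ℝ}
    (h : ∀ y, mean μ (fun z => ind (φ z = y)) = ν y) : LawPreserving φ μ ν := by
  intro g
  have hexpand (z : Z) : g (φ z) = ∑ y, ind (φ z = y) * g y := by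
    classical
    simp [ind]
  simp only [hexpand, mean_sum, mean_mul_const, h]
  rfl

lemma LawPreserving.pi [DecidableEq ι] {φ : ι → Z → Y} {ρ : ι → Z → ℝ} {σ : ι → Y → ℝ}
    (h : ∀ k, LawPreserving (φ k) (ρ k) (σ k)) :
    LawPreserving (fun z k => φ k (z k)) (piLaw ρ) (piLaw σ) := by
  refine lawPreserving_of_mean_ind_eq fun y => ?_
  have hprod (z : ι → Z) : ind ((fun k => φ k (z k)) = y) = ∏ k, ind (φ k (z k) = y k) := by
    simp only [prod_ind, Finset.mem_univ, true_imp_iff, funext_iff]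
  simp only [hprod, mean_piLaw_prod ρ fun k z => ind (φ k z = y k), (h _).mean_ind_eq]
  rfl

lemma lawPreserving_eval [DecidableEq ι] {ρ : ι → Z → ℝ} (hρ : ∀ k, ρ k ∈ stdSimplex ℝ Z)
    (k : ι) : LawPreserving (fun z : ι → Z => z k) (piLaw ρ) (ρ k) := by
  intro g
  have hfactor (z : ι → Z) : g (z k) = ∏ j, if j = k then g (z j) else 1 := by simp
  simp only [hfactor, mean_piLaw_prod ρ fun j z => if j = k then g z else 1]
  rw [Finset.prod_eq_single k (fun j _ hj => by simp only [hj, if_false, mean_const (hρ j)])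
    (by simp)]
  simp only [if_true]

lemma lawPreserving_uniformOn_of_equivariant {G : Type*} [Group G] [MulAction G Z]
    [MulAction G Y] {μ : Z → ℝ} {φ : Z → Y} {T : Finset Y} (hμ : μ ∈ stdSimplex ℝ Z)
    (hinv : ∀ (g : G) (z : Z), μ (g • z) = μ z) (hφ : ∀ (g : G) (z : Z), φ (g • z) = g • φ z)
    (hT : ∀ z, 0 < μ z → φ z ∈ T) (htrans : ∀ y ∈ T, ∀ y' ∈ T, ∃ g : G, g • y = y') :
    LawPreserving φ μ (uniformOn T) := by
  set ν : Y → ℝ := fun y => mean μ fun z => ind (φ z = y) with hν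
  have hν_smul (g : G) (y : Y) : ν (g • y) = ν y := by
    refine (Fintype.sum_equiv (MulAction.toPerm g) _ _ fun z => ?_).symm
    simp only [MulAction.toPerm_apply, hinv, hφ, smul_left_cancel_iff]
  have hν_total : ∑ y ∈ T, ν y = 1 := by
    classical
    rw [hν, ← mean_sum, ← mean_const hμ 1]
    refine le_antisymm (mean_mono_of_pos hμ fun z hz => ?_) (mean_mono_of_pos hμ fun z hz => ?_) <;>
      simp [ind, hT z hz]
  refine lawPreserving_of_mean_ind_eq fun y => ?_
  by_cases hy : y ∈ T
  · have hconst : ∀ y' ∈ T, ν y' = ν y := fun y' hy' => by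
      obtain ⟨g, rfl⟩ := htrans y hy y' hy'
      exact hν_smul g y
    rw [Finset.sum_congr rfl hconst, Finset.sum_const, nsmul_eq_mul] at hν_total
    rw [uniformOn, ind_of_true hy]
    exact eq_one_div_of_mul_eq_one_right hν_total
  · rw [uniformOn, ind_of_false hy, zero_div]
    refine le_antisymm ?_ (mean_nonneg hμ fun z => ind_nonneg _)
    refine (mean_mono_of_pos hμ fun z hz => ?_).trans (mean_const hμ 0).le
    exact (ind_of_false (ne_of_mem_of_not_mem (hT z hz) hy)).le

end Laws

section Resampling

variable {ι Z : Type*} [Fintype ι] [DecidableEq ι] [Fintype Z] {ρ : ι → Z → ℝ}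

lemma mean_piLaw_swap (ρ : ι → Z → ℝ) (A : Finset ι) (F : (ι → Z) → (ι → Z) → ℝ) :
    mean (piLaw ρ) (fun x => mean (piLaw ρ) fun y => F (A.piecewise y x) (A.piecewise x y)) =
      mean (piLaw ρ) fun x => mean (piLaw ρ) fun y => F x y := by
  have hswap (k : ι) : LawPreserving (if k ∈ A then Prod.swap else id)
      (compProd (ρ k) fun _ => ρ k) (compProd (ρ k) fun _ => ρ k) := by
    intro g
    split_ifs
    · rw [mean_compProd, mean_compProd, mean_comm]
      rfl
    · rfl
  have h := LawPreserving.pi hswap fun w => F (fun k => (w k).1) fun k => (w k).2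
  rw [mean_piLaw_compProd_const, mean_piLaw_compProd_const] at h
  rw [← h]
  congr! with x y k k <;> by_cases hk : k ∈ A <;> simp [hk]

lemma mean_piLaw_piecewise (hρ : ∀ k, ρ k ∈ stdSimplex ℝ Z) (A : Finset ι) (F : (ι → Z) → ℝ) :
    mean (piLaw ρ) (fun x => mean (piLaw ρ) fun y => F (A.piecewise y x)) = mean (piLaw ρ) F := by
  rw [mean_piLaw_swap ρ A fun x _ => F x]
  simp only [mean_const (piLaw_mem_stdSimplex hρ)]

end Resampling

section Influence

variable {ι α T : Type*} [Fintype ι] [DecidableEq ι] [Fintype α]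

/-- The uniform law on `ι → α`. -/
noncomputable def uniformPi (ι α : Type*) [Fintype ι] [Fintype α] : (ι → α) → ℝ :=
  piLaw fun _ => uniformOn Finset.univ

/-- The influence on `f` of the block `R` of coordinates: the probability that `f` changes when
the coordinates in `R` of a uniform point are resampled. -/
noncomputable def influence (f : (ι → α) → T) (R : Finset ι) : ℝ :=
  mean (uniformPi ι α) fun x => mean (uniformPi ι α) fun y => ind (f x ≠ f (R.piecewise y x))

lemma uniformPi_mem_stdSimplex [Nonempty α] : uniformPi ι α ∈ stdSimplex ℝ (ι → α) :=
  piLaw_mem_stdSimplex fun _ => uniformOn_mem_stdSimplex Finset.univ_nonempty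

variable [Nonempty α] (f : (ι → α) → T)

lemma influence_nonneg (R : Finset ι) : 0 ≤ influence f R :=
  mean_nonneg uniformPi_mem_stdSimplex fun _ =>
    mean_nonneg uniformPi_mem_stdSimplex fun _ => ind_nonneg _

lemma influence_empty : influence f ∅ = 0 := by
  simp only [influence, Finset.piecewise_empty, ne_eq, not_true_eq_false,
    ind_of_false not_false, mean_const uniformPi_mem_stdSimplex]

lemma influence_eq_mean_three (R : Finset ι) :
    influence f R = mean (uniformPi ι α) fun x => mean (uniformPi ι α) fun a =>
      mean (uniformPi ι α) fun b => ind (f (R.piecewise a x) ≠ f (R.piecewise b x)) := by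
  rw [influence, uniformPi, ← mean_piLaw_piecewise
    (fun _ => uniformOn_mem_stdSimplex Finset.univ_nonempty) R]
  simp only [Finset.piecewise_idem_right]

lemma influence_union_le {A B : Finset ι} (h : Disjoint A B) :
    influence f (A ∪ B) ≤ influence f A + influence f B := by
  have hU := uniformPi_mem_stdSimplex (ι := ι) (α := α)
  have hsplit (x y : ι → α) : ind (f x ≠ f ((A ∪ B).piecewise y x)) ≤
      ind (f (B.piecewise y x) ≠ f (A.piecewise (B.piecewise x y) (B.piecewise y x))) +
        ind (f x ≠ f (B.piecewise y x)) := by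
    have hunion : (A ∪ B).piecewise y x = A.piecewise (B.piecewise x y) (B.piecewise y x) := by
      ext k
      have hAB : k ∈ A → k ∉ B := fun hk => Finset.disjoint_left.1 h hk
      by_cases hA : k ∈ A <;> by_cases hB : k ∈ B <;> simp_all
    rw [hunion]
    refine ind_le_add fun hne => or_iff_not_imp_right.2 fun heq => ?_
    rwa [← not_not.1 heq]
  calc influence f (A ∪ B) ≤ _ := mean_mono hU fun x => mean_mono hU fun y => hsplit x y
    _ = influence f A + influence f B := by
      simp only [mean_add]
      congr 1
      exact mean_piLaw_swap _ B fun x y => ind (f x ≠ f (A.piecewise y x))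

lemma influence_univ_le (A : Finset ι) :
    influence f Finset.univ ≤ influence f A + influence f Aᶜ := by
  rw [← Finset.union_compl A]
  exact influence_union_le f disjoint_compl_right

variable {f}

lemma lt_influence_univ {ε : ℝ}
    (hf : ∀ c, mean (uniformPi ι α) (fun x => ind (f x = c)) < 1 - ε) :
    ε < influence f Finset.univ := by
  have hU := uniformPi_mem_stdSimplex (ι := ι) (α := α)
  by_contra! hle
  rw [influence, mean_comm] at hle
  obtain ⟨y, hy⟩ := exists_le_of_mean_le hU hle
  simp only [Finset.piecewise_univ, ne_eq, ind_not, mean_sub, mean_const hU] at hy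
  linarith [hf (f y)]

lemma exists_mean_ne_le_influence (f : (ι → α) → T) (k : ι) :
    ∃ φ : α → T, mean (uniformPi ι α) (fun x => ind (f x ≠ φ (x k))) ≤ influence f {k}ᶜ := by
  have hle : mean (uniformPi ι α) (fun y => mean (uniformPi ι α) fun x =>
      ind (f x ≠ f (({k}ᶜ : Finset ι).piecewise y x))) ≤ influence f {k}ᶜ := (mean_comm _ _ _).le
  obtain ⟨y, hy⟩ := exists_le_of_mean_le uniformPi_mem_stdSimplex hle
  have hupdate (x : ι → α) : ({k}ᶜ : Finset ι).piecewise y x = Function.update y k (x k) := by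
    rw [Finset.piecewise_compl, Finset.piecewise_singleton]
  exact ⟨fun a => f (Function.update y k a), by simpa only [hupdate] using hy⟩

end Influence

section ReverseHypercontractivity

lemma pow_succ_add_mul_sub_le_pow {x y : ℝ} (hx : 0 ≤ x) (hy : 0 ≤ y) (k : ℕ) :
    y ^ (k + 1) + (k + 1) * y ^ k * (x - y) ≤ x ^ (k + 1) := by
  induction k with
  | zero => simp
  | succ k ih =>
    have hsq : 0 ≤ (k + 1) * y ^ k * (x - y) ^ 2 := by positivity
    have hmul := mul_le_mul_of_nonneg_left ih hx
    push_cast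
    linear_combination hmul + hsq

lemma taylor_two_pow_le_one {y : ℝ} (hy₀ : 0 ≤ y) (hy₁ : y ≤ 1) (k : ℕ) :
    y ^ (k + 2) + (k + 2) * y ^ (k + 1) * (1 - y) + (k + 2) * (k + 1) / 2 * y ^ k * (1 - y) ^ 2 ≤
      1 := by
  induction k with
  | zero => exact le_of_eq (by push_cast; ring)
  | succ k ih =>
    have hrem : 0 ≤ (k + 2) * (k + 1) / 2 * y ^ k * (1 - y) ^ 3 :=
      mul_nonneg (by positivity) (pow_nonneg (sub_nonneg.2 hy₁) 3)
    push_cast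
    linear_combination ih + hrem

lemma two_le_of_two_le_mul_sub_one {c : ℝ} {K : ℕ} (hc : 0 < c) (hK : 2 ≤ c * (K - 1)) :
    2 ≤ K := by
  by_contra! hlt
  have : (K : ℝ) ≤ 1 := by exact_mod_cast Nat.lt_succ_iff.1 hlt
  nlinarith

variable {E : Type*} {s : Finset E} {a : E → ℝ}

lemma one_sub_sum_one_sub_le_prod (ha₀ : ∀ e ∈ s, 0 ≤ a e) (ha₁ : ∀ e ∈ s, a e ≤ 1) :
    1 - ∑ e ∈ s, (1 - a e) ≤ ∏ e ∈ s, a e := by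
  classical
  induction s using Finset.induction_on with
  | empty => simp
  | insert e s he ih =>
    simp only [Finset.forall_mem_insert] at ha₀ ha₁
    have hs : ∏ x ∈ s, a x ≤ 1 := Finset.prod_le_one ha₀.2 ha₁.2
    rw [Finset.sum_insert he, Finset.prod_insert he]
    nlinarith [ih ha₀.2 ha₁.2, mul_nonneg (sub_nonneg.2 ha₁.1) (sub_nonneg.2 hs)]

lemma prod_mul_one_add_sum_one_sub_le_one (ha₀ : ∀ e ∈ s, 0 ≤ a e) :
    (∏ e ∈ s, a e) * (1 + ∑ e ∈ s, (1 - a e)) ≤ 1 := by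
  have hprod : ∏ e ∈ s, a e ≤ Real.exp (-∑ e ∈ s, (1 - a e)) := by
    rw [← Finset.sum_neg_distrib, Real.exp_sum]
    exact Finset.prod_le_prod ha₀ fun e _ => by linarith [Real.add_one_le_exp (-(1 - a e))]
  calc (∏ e ∈ s, a e) * (1 + ∑ e ∈ s, (1 - a e))
      ≤ (∏ e ∈ s, a e) * Real.exp (∑ e ∈ s, (1 - a e)) :=
        mul_le_mul_of_nonneg_left (by linarith [Real.add_one_le_exp (∑ e ∈ s, (1 - a e))])
          (Finset.prod_nonneg ha₀)
    _ ≤ Real.exp (-∑ e ∈ s, (1 - a e)) * Real.exp (∑ e ∈ s, (1 - a e)) :=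
        mul_le_mul_of_nonneg_right hprod (Real.exp_nonneg _)
    _ = 1 := by rw [← Real.exp_add, neg_add_cancel, Real.exp_zero]

variable {Z : Type*} [Fintype Z] {μ : Z → ℝ} {c : ℝ} {K : ℕ} {z₀ : Z} {F : E → Z → ℝ}

lemma tangent_add_gain_le_mean_pow (hμ : μ ∈ stdSimplex ℝ Z) (hc : 0 < c) (hz₀ : c ≤ μ z₀)
    {P : Z → ℝ} (hP : ∀ z, 0 < μ z → 0 ≤ P z) (hPz₀ : P z₀ = 1) {y : ℝ} (hy₀ : 0 ≤ y)
    (hy₁ : y ≤ 1) (k : ℕ) :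
    y ^ (k + 2) + (k + 2) * y ^ (k + 1) * (mean μ P - y) +
      c * ((k + 2) * (k + 1) / 2 * y ^ k * (1 - y) ^ 2) ≤ mean μ fun z => P z ^ (k + 2) := by
  have hatom := mul_le_mean_of_le (F := fun z =>
    P z ^ (k + 2) - (y ^ (k + 2) + (k + 2) * y ^ (k + 1) * (P z - y))) hμ hc hz₀ fun z hz => by
      have := pow_succ_add_mul_sub_le_pow (hP z hz) hy₀ (k + 1)
      push_cast at this
      linarith
  simp only [mean_sub, mean_add, mean_const_mul, mean_const hμ, hPz₀, one_pow] at hatom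
  have htaylor := mul_le_mul_of_nonneg_left (taylor_two_pow_le_one hy₀ hy₁ k) hc.le
  linarith

-- The tangent term `K * y ^ (K - 1) * (mean P - y)` is at least `-K * y ^ (K - 2) * (1 - y) ^ 2`;
-- the gain at the atom `z₀` makes up for it.
lemma prod_mean_pow_le_of_eq_one (hμ : μ ∈ stdSimplex ℝ Z) (hc : 0 < c) (hK : 2 ≤ c * (K - 1))
    (hz₀ : c ≤ μ z₀) (hF₀ : ∀ e ∈ s, ∀ z, 0 < μ z → 0 ≤ F e z)
    (hF₁ : ∀ e ∈ s, ∀ z, 0 < μ z → F e z ≤ 1) (hFz₀ : ∀ e ∈ s, F e z₀ = 1) :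
    (∏ e ∈ s, mean μ (F e)) ^ K ≤ mean μ fun z => (∏ e ∈ s, F e z) ^ K := by
  obtain ⟨k, rfl⟩ := Nat.exists_eq_add_of_le' (two_le_of_two_le_mul_sub_one hc hK)
  set P : Z → ℝ := fun z => ∏ e ∈ s, F e z
  set y : ℝ := ∏ e ∈ s, mean μ (F e)
  set d : ℝ := ∑ e ∈ s, (1 - mean μ (F e))
  have ha₀ : ∀ e ∈ s, 0 ≤ mean μ (F e) := fun e he =>
    (mean_const hμ 0).symm.trans_le (mean_mono_of_pos hμ (hF₀ e he))
  have ha₁ : ∀ e ∈ s, mean μ (F e) ≤ 1 := fun e he =>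
    (mean_mono_of_pos hμ (hF₁ e he)).trans (mean_const hμ 1).le
  have hy₀ : 0 ≤ y := Finset.prod_nonneg ha₀
  have hP₀ : ∀ z, 0 < μ z → 0 ≤ P z := fun z hz => Finset.prod_nonneg fun e he => hF₀ e he z hz
  have hd : 1 - d ≤ mean μ P :=
    calc 1 - d = mean μ fun z => 1 - ∑ e ∈ s, (1 - F e z) := by
          simp only [mean_sub, mean_sum, mean_const hμ, d]
      _ ≤ mean μ P := mean_mono_of_pos hμ fun z hz =>
          one_sub_sum_one_sub_le_prod (fun e he => hF₀ e he z hz) fun e he => hF₁ e he z hz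
  have hyd : y * (1 + d) ≤ 1 := prod_mul_one_add_sum_one_sub_le_one ha₀
  have hjensen := tangent_add_gain_le_mean_pow hμ hc hz₀ hP₀ (Finset.prod_eq_one hFz₀) hy₀
    (Finset.prod_le_one ha₀ ha₁) k
  have hloss : 0 ≤ (k + 2) * y ^ k * (y * (mean μ P - y) + (1 - y) ^ 2) :=
    mul_nonneg (by positivity) (by nlinarith)
  have hgain : 0 ≤ (k + 2) * y ^ k * (1 - y) ^ 2 * (c * (k + 1) - 2) := by
    push_cast at hK
    exact mul_nonneg (by positivity) (by linarith)
  linear_combination hjensen + hloss + hgain / 2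

lemma prod_mean_pow_le (hμ : μ ∈ stdSimplex ℝ Z) (hc : 0 < c) (hK : 2 ≤ c * (K - 1))
    (hz₀ : c ≤ μ z₀) (hF₀ : ∀ e ∈ s, ∀ z, 0 < μ z → 0 ≤ F e z)
    (hmax : ∀ e ∈ s, ∀ z, 0 < μ z → F e z ≤ F e z₀) :
    (∏ e ∈ s, mean μ (F e)) ^ K ≤ mean μ fun z => (∏ e ∈ s, F e z) ^ K := by
  have hM : ∀ e ∈ s, 0 ≤ F e z₀ := fun e he => hF₀ e he z₀ (hc.trans_le hz₀)
  by_cases hM₀ : ∃ e ∈ s, F e z₀ = 0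
  · obtain ⟨e, he, hez₀⟩ := hM₀
    have hmean : mean μ (F e) = 0 := le_antisymm
      ((mean_mono_of_pos hμ (hmax e he)).trans_eq ((mean_const hμ _).trans hez₀))
      ((mean_const hμ 0).symm.trans_le (mean_mono_of_pos hμ (hF₀ e he)))
    have hK₀ : K ≠ 0 := (two_pos.trans_le (two_le_of_two_le_mul_sub_one hc hK)).ne'
    rw [Finset.prod_eq_zero he hmean, zero_pow hK₀, ← mean_const hμ 0]
    exact mean_mono_of_pos hμ fun z hz =>
      pow_nonneg (Finset.prod_nonneg fun e he => hF₀ e he z hz) K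
  · push Not at hM₀
    have hscale : ∀ e ∈ s, F e = fun z => F e z₀ * (F e z / F e z₀) := fun e he =>
      funext fun z => (mul_div_cancel₀ _ (hM₀ e he)).symm
    have hmean : ∏ e ∈ s, mean μ (F e) =
        (∏ e ∈ s, F e z₀) * ∏ e ∈ s, mean μ fun z => F e z / F e z₀ := by
      rw [← Finset.prod_mul_distrib]
      refine Finset.prod_congr rfl fun e he => ?_
      rw [← mean_const_mul, ← hscale e he]
    have hprod : (fun z => (∏ e ∈ s, F e z) ^ K) =
        fun z => (∏ e ∈ s, F e z₀) ^ K * (∏ e ∈ s, F e z / F e z₀) ^ K := by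
      funext z
      rw [← mul_pow, ← Finset.prod_mul_distrib]
      exact congrArg (· ^ K) (Finset.prod_congr rfl fun e he => congrFun (hscale e he) z)
    rw [hmean, mul_pow, hprod, mean_const_mul]
    refine mul_le_mul_of_nonneg_left ?_ (pow_nonneg (Finset.prod_nonneg hM) K)
    exact prod_mean_pow_le_of_eq_one (F := fun e z => F e z / F e z₀) hμ hc hK hz₀
      (fun e he z hz => div_nonneg (hF₀ e he z hz) (hM e he))
      (fun e he z hz => div_le_one_of_le₀ (hmax e he z hz) (hM e he))
      (fun e he => div_self (hM₀ e he))

lemma mean_piLaw_succ {p : ℕ} (ρ : Fin (p + 1) → Z → ℝ) (G : (Fin (p + 1) → Z) → ℝ) :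
    mean (piLaw ρ) G =
      mean (ρ 0) fun z => mean (piLaw fun k => ρ k.succ) fun w => G (Fin.cons z w) := by
  rw [← mean_compProd (ρ 0) (fun _ => piLaw fun k => ρ k.succ) fun w => G (Fin.cons w.1 w.2)]
  refine (Fintype.sum_equiv (Fin.consEquiv fun _ => Z) _ _ fun w => ?_).symm
  simp [piLaw, compProd, Fin.consEquiv, Fin.prod_univ_succ]

theorem prod_mean_piLaw_pow_le {Ω : Type*} {p : ℕ} {ρ : Fin p → Z → ℝ} {X : E → Fin p → Z → Ω}
    (hρ : ∀ k, ρ k ∈ stdSimplex ℝ Z) (hc : 0 < c) (hK : 2 ≤ c * (K - 1))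
    (hX : ∀ k (y : E → Z), (∀ e, 0 < ρ k (y e)) →
      ∃ z, c ≤ ρ k z ∧ ∀ e ∈ s, X e k z = X e k (y e))
    {A : E → (Fin p → Ω) → ℝ} (hA : ∀ e x, 0 ≤ A e x) :
    (∏ e ∈ s, mean (piLaw ρ) fun z => A e fun k => X e k (z k)) ^ K ≤
      mean (piLaw ρ) fun z => (∏ e ∈ s, A e fun k => X e k (z k)) ^ K := by
  induction p with
  | zero => simp [mean, piLaw]
  | succ p ih =>
    have htail (k : Fin p) : ρ k.succ ∈ stdSimplex ℝ Z := hρ k.succ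
    have hcons (e : E) (z : Z) (w : Fin p → Z) :
        (fun k => X e k ((Fin.cons z w : Fin (p + 1) → Z) k)) =
          Fin.cons (X e 0 z) fun k => X e k.succ (w k) := by
      ext k
      cases k using Fin.cases <;> rfl
    set F : E → Z → ℝ := fun e z =>
      mean (piLaw fun k => ρ k.succ) fun w => A e (Fin.cons (X e 0 z) fun k => X e k.succ (w k))
    have hF (e : E) (z : Z) : 0 ≤ F e z :=
      mean_nonneg (piLaw_mem_stdSimplex htail) fun w => hA e _
    have hargmax (e : E) : ∃ z, 0 < ρ 0 z ∧ ∀ z', 0 < ρ 0 z' → F e z' ≤ F e z :=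
      Set.exists_max_image {z | 0 < ρ 0 z} (F e) (Set.toFinite _)
        (exists_pos_of_mem_stdSimplex (hρ 0))
    choose y hy hymax using hargmax
    obtain ⟨z₀, hz₀, hXz₀⟩ := hX 0 y hy
    have hmax : ∀ e ∈ s, ∀ z, 0 < ρ 0 z → F e z ≤ F e z₀ := fun e he z hz => by
      simpa only [F, hXz₀ e he] using hymax e z hz
    simp only [mean_piLaw_succ ρ, hcons]
    calc (∏ e ∈ s, mean (ρ 0) (F e)) ^ K
        ≤ mean (ρ 0) fun z => (∏ e ∈ s, F e z) ^ K :=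
          prod_mean_pow_le (hρ 0) hc hK hz₀ (fun e _ z _ => hF e z) hmax
      _ ≤ _ := mean_mono (hρ 0) fun z =>
          ih (ρ := fun k => ρ k.succ) (X := fun e k => X e k.succ) htail (fun k => hX k.succ)
            (A := fun e x => A e (Fin.cons (X e 0 z) x)) fun e x => hA e _

end ReverseHypercontractivity

section Derangement

variable {α T : Type*} [Fintype α] [Nonempty α]

lemma half_influence_pow_le {ι : Type*} [Fintype ι] [DecidableEq ι] [Fintype T]
    (f : (ι → α) → T) (Q : Finset ι) (K : ℕ) :
    (influence f Q / 2) ^ (Fintype.card T * K) ≤ mean (uniformPi ι α) fun a =>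
      (∏ b, mean (uniformPi ι α) fun x => ind (f (Q.piecewise x a) ≠ b)) ^ K := by
  have hU := uniformPi_mem_stdSimplex (ι := ι) (α := α)
  set q : (ι → α) → T → ℝ := fun a b =>
    mean (uniformPi ι α) fun x => ind (f (Q.piecewise x a) ≠ b)
  set r : (ι → α) → ℝ := fun a => mean (uniformPi ι α) fun x =>
    mean (uniformPi ι α) fun y => ind (f (Q.piecewise x a) ≠ f (Q.piecewise y a))
  have hr₀ (a : ι → α) : 0 ≤ r a / 2 :=
    div_nonneg (mean_nonneg hU fun x => mean_nonneg hU fun y => ind_nonneg _) zero_le_two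
  have hrq (a : ι → α) (b : T) : r a / 2 ≤ q a b := by
    have hle : r a ≤ q a b + q a b :=
      calc r a ≤ mean (uniformPi ι α) fun x => mean (uniformPi ι α) fun y =>
            ind (f (Q.piecewise x a) ≠ b) + ind (f (Q.piecewise y a) ≠ b) :=
            mean_mono hU fun x => mean_mono hU fun y => ind_le_add fun hne => by
              by_contra! heq
              exact hne (heq.1.trans heq.2.symm)
        _ = q a b + q a b := by simp only [mean_add, mean_const hU, q]
    linarith
  calc (influence f Q / 2) ^ (Fintype.card T * K)
      = mean (uniformPi ι α) (fun a => r a / 2) ^ (Fintype.card T * K) := by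
        rw [influence_eq_mean_three]
        simp only [div_eq_mul_inv, mean_mul_const, r]
    _ ≤ mean (uniformPi ι α) fun a => (r a / 2) ^ (Fintype.card T * K) := pow_mean_le hU hr₀ _
    _ ≤ mean (uniformPi ι α) fun a => (∏ b, q a b) ^ K := mean_mono hU fun a => by
        rw [pow_mul]
        refine pow_le_pow_left₀ (pow_nonneg (hr₀ a) _) ?_ K
        rw [← Finset.card_univ, ← Finset.prod_const]
        exact Finset.prod_le_prod (fun b _ => hr₀ a) fun b _ => hrq a b

variable {Z : Type*} [Fintype Z] {p : ℕ} {ρ : Fin p → Z → ℝ} {Y : Z → α → α}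
  {Q : Finset (Fin p)} {c : ℝ} {K : ℕ}

lemma mean_forall_piecewise_ne_le (hρ : ∀ k, ρ k ∈ stdSimplex ℝ Z)
    (hY : ∀ k b, LawPreserving (fun z => Y z b) (ρ k) (uniformOn Finset.univ))
    (hQc : ∀ k ∉ Q, ∀ z, 0 < ρ k z → ∀ b b', Y z b = Y z b') (f : (Fin p → α) → α) :
    mean (uniformPi (Fin p) α) (fun a => mean (piLaw ρ) fun z =>
      ind (∀ b, f (Q.piecewise (fun k => Y (z k) b) a) ≠ b)) ≤
      mean (piLaw ρ) fun z => ind (∀ b, f (fun k => Y (z k) b) ≠ b) := by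
  have hP := piLaw_mem_stdSimplex hρ
  let b₀ : α := Classical.arbitrary α
  have hb₀ : LawPreserving (fun z k => Y (z k) b₀) (piLaw ρ) (uniformPi (Fin p) α) :=
    LawPreserving.pi fun k => hY k b₀
  rw [← hb₀, ← mean_piLaw_piecewise hρ Q fun z => ind (∀ b, f (fun k => Y (z k) b) ≠ b)]
  refine mean_mono_of_pos hP fun w hw => mean_mono hP fun z => ind_mono fun h b => ?_
  convert h b using 3 with k
  by_cases hk : k ∈ Q
  · simp only [Finset.piecewise_eq_of_mem _ _ _ hk]
  · simp only [Finset.piecewise_eq_of_notMem _ _ _ hk]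
    exact hQc k hk _ (pos_of_piLaw_pos (fun k => (hρ k).1) hw k) b b₀

theorem half_influence_pow_le_mean_forall_ne (hρ : ∀ k, ρ k ∈ stdSimplex ℝ Z) (hc : 0 < c)
    (hK : 2 ≤ c * (K - 1)) (hatom : ∀ k, ∃ z, c ≤ ρ k z)
    (hY : ∀ k b, LawPreserving (fun z => Y z b) (ρ k) (uniformOn Finset.univ))
    (hQ : ∀ k ∈ Q, ∀ ω : α → α, ∃ z, c ≤ ρ k z ∧ Y z = ω)
    (hQc : ∀ k ∉ Q, ∀ z, 0 < ρ k z → ∀ b b', Y z b = Y z b') (f : (Fin p → α) → α) :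
    (influence f Q / 2) ^ (Fintype.card α * K) ≤
      mean (piLaw ρ) fun z => ind (∀ b, f (fun k => Y (z k) b) ≠ b) := by
  have hYpi (b : α) : LawPreserving (fun z k => Y (z k) b) (piLaw ρ) (uniformPi (Fin p) α) :=
    LawPreserving.pi fun k => hY k b
  have hK₀ : K ≠ 0 := (two_pos.trans_le (two_le_of_two_le_mul_sub_one hc hK)).ne'
  have hexchange (a : Fin p → α) (k : Fin p) (y : α → Z) : ∃ z, c ≤ ρ k z ∧
      ∀ b ∈ Finset.univ, (if k ∈ Q then Y z b else a k) = if k ∈ Q then Y (y b) b else a k := by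
    split_ifs with hk
    · obtain ⟨z, hz, hYz⟩ := hQ k hk fun b => Y (y b) b
      exact ⟨z, hz, fun b _ => congrFun hYz b⟩
    · exact (hatom k).imp fun z hz => ⟨hz, fun _ _ => rfl⟩
  calc (influence f Q / 2) ^ (Fintype.card α * K)
      ≤ mean (uniformPi (Fin p) α) fun a =>
          (∏ b, mean (uniformPi (Fin p) α) fun x => ind (f (Q.piecewise x a) ≠ b)) ^ K :=
        half_influence_pow_le f Q K
    _ = mean (uniformPi (Fin p) α) fun a => (∏ b, mean (piLaw ρ) fun z =>
          ind (f (Q.piecewise (fun k => Y (z k) b) a) ≠ b)) ^ K := by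
        simp only [fun a b => hYpi b fun x => ind (f (Q.piecewise x a) ≠ b)]
    _ ≤ mean (uniformPi (Fin p) α) fun a => mean (piLaw ρ) fun z =>
          (∏ b, ind (f (Q.piecewise (fun k => Y (z k) b) a) ≠ b)) ^ K :=
        mean_mono uniformPi_mem_stdSimplex fun a =>
          prod_mean_piLaw_pow_le (X := fun b k z => if k ∈ Q then Y z b else a k)
            (A := fun b x => ind (f x ≠ b)) hρ hc hK (fun k y _ => hexchange a k y)
            fun b x => ind_nonneg _
    _ = mean (uniformPi (Fin p) α) fun a => mean (piLaw ρ) fun z =>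
          ind (∀ b, f (Q.piecewise (fun k => Y (z k) b) a) ≠ b) := by
        simp only [prod_ind, Finset.mem_univ, true_imp_iff, ind_pow _ hK₀]
    _ ≤ mean (piLaw ρ) fun z => ind (∀ b, f (fun k => Y (z k) b) ≠ b) :=
        mean_forall_piecewise_ne_le hρ hY hQc f

end Derangement

section CondCopies

variable {Z Y E : Type*} [Fintype Z] [Fintype E]

/-- The conditional law given the value of `g`, as a function of a point `v` with that value. It is
a law when `0 < μ v`. -/
noncomputable def condLaw (μ : Z → ℝ) (g : Z → Y) (v u : Z) : ℝ :=
  ind (g u = g v) * μ u / mean μ fun w => ind (g w = g v)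

/-- The joint law of a sample `v` from `μ` and of `E` further samples that are independent given
the value `g v` that they share with `v`. -/
noncomputable def condCopies (E : Type*) [Fintype E] (μ : Z → ℝ) (g : Z → Y) :
    Z × (E → Z) → ℝ :=
  compProd μ fun v => piLaw fun _ => condLaw μ g v

variable {μ : Z → ℝ} {g : Z → Y} {v u : Z} (hμ : μ ∈ stdSimplex ℝ Z)
include hμ

lemma mean_ind_eq_pos (hv : 0 < μ v) : 0 < mean μ fun w => ind (g w = g v) := by
  have := mul_le_mean_of_le hμ hv le_rfl (F := fun w => ind (g w = g v)) fun w _ => ind_nonneg _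
  rw [ind_of_true rfl, mul_one] at this
  exact hv.trans_le this

lemma condLaw_nonneg (v u : Z) : 0 ≤ condLaw μ g v u :=
  div_nonneg (mul_nonneg (ind_nonneg _) (hμ.1 u)) (mean_nonneg hμ fun _ => ind_nonneg _)

lemma condLaw_mem_stdSimplex (hv : 0 < μ v) : condLaw μ g v ∈ stdSimplex ℝ Z := by
  refine ⟨condLaw_nonneg hμ v, ?_⟩
  simp only [condLaw, mul_comm (ind _), ← Finset.sum_div]
  exact div_self (mean_ind_eq_pos hμ hv).ne'

lemma le_condLaw (hu : 0 < μ u) (h : g u = g v) : μ u ≤ condLaw μ g v u := by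
  have hpos : 0 < mean μ fun w => ind (g w = g v) := h ▸ mean_ind_eq_pos hμ hu
  have hle : (mean μ fun w => ind (g w = g v)) ≤ 1 :=
    (mean_mono hμ fun _ => ind_le_one _).trans (mean_const hμ 1).le
  rw [condLaw, ind_of_true h, one_mul]
  exact le_div_self hu.le hpos hle

omit hμ in
lemma pos_and_eq_of_condLaw_ne_zero (hμ₀ : ∀ z, 0 ≤ μ z) (h : condLaw μ g v u ≠ 0) :
    0 < μ u ∧ g u = g v := by
  refine ⟨(hμ₀ u).lt_of_ne' fun h0 => h ?_, by_contra fun hne => h ?_⟩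
  · simp only [condLaw, h0, mul_zero, zero_div]
  · simp only [condLaw, ind_of_false hne, zero_mul, zero_div]

lemma mean_mean_condLaw (F : Z → ℝ) : mean μ (fun v => mean (condLaw μ g v) F) = mean μ F := by
  have hcomm (v u : Z) : μ v * (condLaw μ g v u * F u) =
      μ u * F u * (μ v * ind (g v = g u)) / mean μ fun w => ind (g w = g u) := by
    unfold condLaw
    by_cases h : g u = g v
    · rw [h]
      ring
    · rw [ind_of_false h, ind_of_false (Ne.symm h)]
      ring
  simp only [mean, Finset.mul_sum]
  rw [Finset.sum_comm]
  refine Finset.sum_congr rfl fun u _ => ?_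
  rcases (hμ.1 u).eq_or_lt with hu | hu
  · simp only [hcomm, ← hu, zero_mul, zero_div, Finset.sum_const_zero]
  · simp only [hcomm, ← Finset.sum_div, ← Finset.mul_sum]
    exact mul_div_cancel_right₀ _ (mean_ind_eq_pos hμ hu).ne'

variable [DecidableEq E]

lemma condCopies_mem_stdSimplex : condCopies E μ g ∈ stdSimplex ℝ (Z × (E → Z)) :=
  compProd_mem_stdSimplex hμ (fun v _ => Finset.prod_nonneg fun _ _ => condLaw_nonneg hμ v _)
    fun _ hv => piLaw_mem_stdSimplex fun _ => condLaw_mem_stdSimplex hμ hv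

lemma lawPreserving_condCopies (e : E) :
    LawPreserving (fun w : Z × (E → Z) => w.2 e) (condCopies E μ g) μ := by
  intro F
  have heval (v : Z) (hv : 0 < μ v) :
      mean (piLaw fun _ : E => condLaw μ g v) (fun u => F (u e)) = mean (condLaw μ g v) F :=
    lawPreserving_eval (fun _ => condLaw_mem_stdSimplex hμ hv) e F
  rw [condCopies, mean_compProd, ← mean_mean_condLaw hμ F (g := g)]
  exact le_antisymm (mean_mono_of_pos hμ fun v hv => (heval v hv).le)
    (mean_mono_of_pos hμ fun v hv => (heval v hv).ge)

omit [DecidableEq E] in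
lemma pow_le_condCopies {β : ℝ} (hβ : 0 < β) {w : Z × (E → Z)} (hv : β ≤ μ w.1)
    (hu : ∀ e, β ≤ μ (w.2 e)) (hg : ∀ e, g (w.2 e) = g w.1) :
    β ^ (Fintype.card E + 1) ≤ condCopies E μ g w := by
  rw [pow_succ', ← Finset.card_univ, ← Finset.prod_const]
  exact mul_le_mul hv (Finset.prod_le_prod (fun _ _ => hβ.le) fun e _ =>
    (hu e).trans (le_condLaw hμ (hβ.trans_le (hu e)) (hg e)))
    (Finset.prod_nonneg fun _ _ => hβ.le) (hμ.1 _)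

omit [DecidableEq E] in
lemma pos_and_eq_of_condCopies_pos {w : Z × (E → Z)} (hw : 0 < condCopies E μ g w) (e : E) :
    0 < μ (w.2 e) ∧ g (w.2 e) = g w.1 :=
  pos_and_eq_of_condLaw_ne_zero hμ.1 fun h =>
    hw.ne' (mul_eq_zero_of_right _ (Finset.prod_eq_zero (Finset.mem_univ e) h))

end CondCopies

section Defect

variable {I α : Type*} [Fintype I] [DecidableEq I] [Fintype α]

/-- The probability that the aggregates `f i` of independent samples from `μ` do not form a
surjective vector. -/
noncomputable def defect {p : ℕ} (μ : (I → α) → ℝ) (f : I → (Fin p → α) → α) : ℝ :=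
  mean (piLaw fun _ => μ) fun x => ind ¬Function.Surjective fun i => f i fun k => x k i

/-- If no `f i` is close to a constant and the defect is small, no block `R` of coordinates
influences one of the `f i` while its complement influences another one. -/
def HasInfluenceDichotomy (μ : (I → α) → ℝ) : Prop :=
  ∀ θ > 0, ∃ δ > 0, ∀ (p : ℕ) (f : I → (Fin p → α) → α),
    (∀ i, θ ≤ influence (f i) Finset.univ) → ∀ (R : Finset (Fin p)) (i l : I), i ≠ l →
      θ ≤ influence (f l) R → θ ≤ influence (f i) Rᶜ → δ ≤ defect μ f

end Defect

section MoreObjects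

variable {I α E : Type*} [Fintype α] [DecidableEq I] {J : Finset I} {i : I}

lemma exists_forall_surjective_piecewise (hJ : J.card + 1 = Fintype.card α) (hi : i ∉ J) (a : α) :
    ∃ g : I → α, ∀ x : I → α, x i = a → Function.Surjective (J.piecewise g x) := by
  classical
  have hcard : Fintype.card {c // c ≠ a} = Fintype.card J := by
    rw [Fintype.card_subtype_compl, Fintype.card_subtype_eq, Fintype.card_coe, ← hJ,
      Nat.add_sub_cancel]
  let e : {c // c ≠ a} ≃ J := Fintype.equivOfCardEq hcard
  refine ⟨fun j => if hj : j ∈ J then e.symm ⟨j, hj⟩ else a, fun x hx c => ?_⟩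
  rcases eq_or_ne c a with rfl | hc
  · exact ⟨i, by rw [Finset.piecewise_eq_of_notMem _ _ _ hi, hx]⟩
  · have hj : (e ⟨c, hc⟩ : I) ∈ J := (e ⟨c, hc⟩).2
    exact ⟨e ⟨c, hc⟩, by rw [Finset.piecewise_eq_of_mem _ _ _ hj, dif_pos hj]; simp⟩

variable [Fintype I] [Fintype E] {μ : (I → α) → ℝ} {β : ℝ}

lemma exists_le_condCopies_restrict (hμ : μ ∈ stdSimplex ℝ (I → α)) (hβ : 0 < β)
    (hβμ : ∀ x, Function.Surjective x → β ≤ μ x) (hJ : J.card + 1 = Fintype.card α) (hi : i ∉ J)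
    {a : α} {y : E → I → α} (hy : ∀ b, y b i = a) :
    ∃ w, β ^ (Fintype.card E + 1) ≤ condCopies E μ (insert i J).restrict w ∧
      ∀ b, ∀ e ∉ J, w.2 b e = y b e := by
  obtain ⟨g, hg⟩ := exists_forall_surjective_piecewise hJ hi a
  refine ⟨(J.piecewise g fun _ => a, fun b => J.piecewise g (y b)),
    pow_le_condCopies hμ hβ (hβμ _ (hg _ rfl)) (fun b => hβμ _ (hg _ (hy b))) fun b => ?_,
    fun b e he => Finset.piecewise_eq_of_notMem _ _ _ he⟩
  ext ⟨j, hj⟩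
  rcases Finset.mem_insert.1 hj with rfl | hjJ
  · simp [hi, hy]
  · simp [hjJ]

lemma eq_of_condCopies_restrict_pos {S : Finset I} (hμ : μ ∈ stdSimplex ℝ (I → α))
    {w : (I → α) × (E → I → α)} (hw : 0 < condCopies E μ S.restrict w) (b : E) {j : I}
    (hj : j ∈ S) : w.2 b j = w.1 j :=
  congrFun (pos_and_eq_of_condCopies_pos hμ hw b).2 ⟨j, hj⟩

variable {p K : ℕ} {pivot : Fin p → I}

lemma mean_condCopies_forall_ne_le_defect [DecidableEq α] (hμ : μ ∈ stdSimplex ℝ (I → α))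
    (hJ : J.card < Fintype.card α) (f : I → (Fin p → α) → α) :
    mean (piLaw fun k => condCopies α μ (insert (pivot k) J).restrict)
        (fun z => ind (∀ e ∈ Jᶜ, ∀ b, f e (fun k => (z k).2 b e) ≠ b)) ≤
      Fintype.card α * defect μ f := by
  have hρ (k : Fin p) := condCopies_mem_stdSimplex (E := α) (g := (insert (pivot k) J).restrict) hμ
  have hcopy (b : α) : LawPreserving (fun z k => (z k).2 b)
      (piLaw fun k => condCopies α μ (insert (pivot k) J).restrict) (piLaw fun _ => μ) :=
    LawPreserving.pi fun k => lawPreserving_condCopies hμ b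
  calc _ ≤ mean (piLaw fun k => condCopies α μ (insert (pivot k) J).restrict) fun z =>
        ∑ b, ind ¬Function.Surjective fun i => f i fun k => (z k).2 b i := by
        refine mean_mono_of_pos (piLaw_mem_stdSimplex hρ) fun z hz => ?_
        have hagree (b : α) (j : I) (hj : j ∈ J) :
            (fun k => (z k).2 b j) = fun k => (z k).1 j := funext fun k =>
          eq_of_condCopies_restrict_pos hμ (pos_of_piLaw_pos (fun k => (hρ k).1) hz k) b
            (Finset.mem_insert_of_mem hj)
        obtain ⟨b, hb⟩ : ∃ b, b ∉ J.image fun j => f j fun k => (z k).1 j := by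
          by_contra! hall
          exact (Finset.card_image_le.trans_lt hJ).ne (Finset.card_eq_iff_eq_univ _ |>.2
            (Finset.eq_univ_of_forall hall))
        refine (ind_mono fun h => ⟨b, fun hsurj => ?_⟩).trans (ind_exists_le_sum _)
        obtain ⟨j, hj⟩ := hsurj b
        by_cases hjJ : j ∈ J
        · exact hb (Finset.mem_image.2 ⟨j, hjJ, (congrArg (f j) (hagree b j hjJ)).symm.trans hj⟩)
        · exact h j (Finset.mem_compl.2 hjJ) b hj
    _ = ∑ _b : α, defect μ f := by
        rw [mean_sum]
        exact Finset.sum_congr rfl fun b _ =>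
          hcopy b fun x => ind ¬Function.Surjective fun i => f i fun k => x k i
    _ = Fintype.card α * defect μ f := by rw [Finset.sum_const, nsmul_eq_mul, Finset.card_univ]

variable [Nonempty α]

lemma half_influence_pow_le_mean_condCopies [DecidableEq α] (hμ : μ ∈ stdSimplex ℝ (I → α))
    (hβ : 0 < β) (hβμ : ∀ x, Function.Surjective x → β ≤ μ x)
    (hmarg : ∀ i, LawPreserving (fun x => x i) μ (uniformOn Finset.univ))
    (hJ : J.card + 1 = Fintype.card α) (hpivot : ∀ k, pivot k ∉ J)
    (hK : 2 ≤ β ^ (Fintype.card α + 1) * (K - 1)) (f : (Fin p → α) → α) {e : I} (he : e ∉ J) :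
    (influence f {k | pivot k ≠ e} / 2) ^ (Fintype.card α * K) ≤
      mean (piLaw fun k => condCopies α μ (insert (pivot k) J).restrict) fun z =>
        ind (∀ b, f (fun k => (z k).2 b e) ≠ b) := by
  let a : α := Classical.arbitrary α
  refine half_influence_pow_le_mean_forall_ne (Y := fun z b => z.2 b e)
    (fun k => condCopies_mem_stdSimplex hμ) (pow_pos hβ _) hK (fun k => ?_)
    (fun k b => (hmarg e).comp (lawPreserving_condCopies hμ b)) (fun k hk ω => ?_)
    (fun k hk z hz b b' => ?_) f
  · obtain ⟨z, hz, -⟩ := exists_le_condCopies_restrict (y := fun _ : α => fun _ => a) hμ hβ hβμ hJ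
      (hpivot k) fun _ => rfl
    exact ⟨z, hz⟩
  · obtain ⟨z, hz, hzω⟩ := exists_le_condCopies_restrict (a := a)
      (y := fun b => Function.update (fun _ => a) e (ω b)) hμ hβ hβμ hJ (hpivot k)
      fun b => Function.update_of_ne (Finset.mem_filter.1 hk).2 _ _
    exact ⟨z, hz, funext fun b => by rw [hzω b e he, Function.update_self]⟩
  · have hk' : e ∈ insert (pivot k) J := by
      simp only [Finset.mem_filter_univ, not_not] at hk
      exact hk ▸ Finset.mem_insert_self _ _
    rw [eq_of_condCopies_restrict_pos hμ hz b hk', eq_of_condCopies_restrict_pos hμ hz b' hk']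

theorem prod_half_influence_pow_le_defect (hμ : μ ∈ stdSimplex ℝ (I → α))
    (hβ : 0 < β) (hβμ : ∀ x, Function.Surjective x → β ≤ μ x)
    (hmarg : ∀ i, LawPreserving (fun x => x i) μ (uniformOn Finset.univ))
    (hJ : J.card + 1 = Fintype.card α) (hpivot : ∀ k, pivot k ∉ J)
    (hK : 2 ≤ β ^ (Fintype.card α + 1) * (K - 1)) (f : I → (Fin p → α) → α) :
    (∏ e ∈ Jᶜ, (influence (f e) {k | pivot k ≠ e} / 2) ^ (Fintype.card α * K)) ^ K ≤
      Fintype.card α * defect μ f := by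
  classical
  have hc : 0 < β ^ (Fintype.card α + 1) := pow_pos hβ _
  have hK₀ : K ≠ 0 := (two_pos.trans_le (two_le_of_two_le_mul_sub_one hc hK)).ne'
  let ρ (k : Fin p) : (I → α) × (α → I → α) → ℝ := condCopies α μ (insert (pivot k) J).restrict
  have hexchange (k : Fin p) (y : I → (I → α) × (α → I → α)) (hy : ∀ e, 0 < ρ k (y e)) :
      ∃ z, β ^ (Fintype.card α + 1) ≤ ρ k z ∧
        ∀ e ∈ Jᶜ, (fun b => z.2 b e) = fun b => (y e).2 b e := by
    obtain ⟨z, hz, hzy⟩ := exists_le_condCopies_restrict (y := fun b e => (y e).2 b e) hμ hβ hβμ hJ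
      (hpivot k) fun b => eq_of_condCopies_restrict_pos hμ (hy _) b (Finset.mem_insert_self _ _)
    exact ⟨z, hz, fun e he => funext fun b => hzy b e (Finset.mem_compl.1 he)⟩
  have hpow := prod_mean_piLaw_pow_le (s := Jᶜ) (ρ := ρ) (X := fun e _ z b => z.2 b e)
    (A := fun e (x : Fin p → α → α) => ind (∀ b, f e (fun k => x k b) ≠ b))
    (fun k => condCopies_mem_stdSimplex hμ) hc hK hexchange fun e x => ind_nonneg _
  calc (∏ e ∈ Jᶜ, (influence (f e) {k | pivot k ≠ e} / 2) ^ (Fintype.card α * K)) ^ K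
      ≤ (∏ e ∈ Jᶜ, mean (piLaw ρ) fun z => ind (∀ b, f e (fun k => (z k).2 b e) ≠ b)) ^ K := by
        have hnonneg (e : I) :
            0 ≤ (influence (f e) {k | pivot k ≠ e} / 2) ^ (Fintype.card α * K) :=
          pow_nonneg (div_nonneg (influence_nonneg _ _) zero_le_two) _
        refine pow_le_pow_left₀ (Finset.prod_nonneg fun e _ => hnonneg e)
          (Finset.prod_le_prod (fun e _ => hnonneg e) fun e he => ?_) K
        exact half_influence_pow_le_mean_condCopies hμ hβ hβμ hmarg hJ hpivot hK (f e)
          (Finset.mem_compl.1 he)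
    _ ≤ mean (piLaw ρ) fun z => (∏ e ∈ Jᶜ, ind (∀ b, f e (fun k => (z k).2 b e) ≠ b)) ^ K :=
        hpow
    _ = mean (piLaw ρ) fun z => ind (∀ e ∈ Jᶜ, ∀ b, f e (fun k => (z k).2 b e) ≠ b) := by
        simp only [prod_ind, ind_pow _ hK₀]
    _ ≤ Fintype.card α * defect μ f :=
        mean_condCopies_forall_ne_le_defect hμ (Nat.lt_of_succ_le hJ.le) f

omit [Fintype I] [Nonempty α] in
lemma le_influence_ite_ne {θ : ℝ} {f : I → (Fin p → α) → α} {l : I} {R : Finset (Fin p)}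
    (hil : i ≠ l) (hf : ∀ e, θ ≤ influence (f e) Finset.univ) (hl : θ ≤ influence (f l) R)
    (hi : θ ≤ influence (f i) Rᶜ) (e : I) :
    θ ≤ influence (f e) {k | (if k ∈ R then i else l) ≠ e} := by
  rcases eq_or_ne e i with rfl | hei
  · convert hi using 2
    ext k
    by_cases hk : k ∈ R <;> simp [hk, hil.symm]
  rcases eq_or_ne e l with rfl | hel
  · convert hl using 2
    ext k
    by_cases hk : k ∈ R <;> simp [hk, hil]
  · convert hf e using 2
    ext k
    by_cases hk : k ∈ R <;> simp [hk, hei.symm, hel.symm]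

theorem hasInfluenceDichotomy_of_card_lt (hμ : μ ∈ stdSimplex ℝ (I → α)) (hβ : 0 < β)
    (hβμ : ∀ x, Function.Surjective x → β ≤ μ x)
    (hmarg : ∀ i, LawPreserving (fun x => x i) μ (uniformOn Finset.univ))
    (hcard : Fintype.card α < Fintype.card I) : HasInfluenceDichotomy μ := by
  intro θ hθ
  obtain ⟨K, hK⟩ : ∃ K : ℕ, 2 ≤ β ^ (Fintype.card α + 1) * (K - 1) := by
    obtain ⟨N, hN⟩ := exists_nat_ge (2 / β ^ (Fintype.card α + 1))
    refine ⟨N + 1, ?_⟩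
    rw [Nat.cast_succ, add_sub_cancel_right]
    exact (div_le_iff₀' (pow_pos hβ _)).1 hN
  have hα : (0 : ℝ) < Fintype.card α := Nat.cast_pos.2 Fintype.card_pos
  refine ⟨(((θ / 2) ^ (Fintype.card α * K)) ^ (Fintype.card I - (Fintype.card α - 1))) ^ K /
    Fintype.card α, by positivity, fun p f hf R i l hil hl hi => ?_⟩
  obtain ⟨J, hJil, hJ⟩ : ∃ J ⊆ ({i, l}ᶜ : Finset I), J.card = Fintype.card α - 1 := by
    refine Finset.exists_subset_card_eq ?_
    rw [Finset.card_compl, Finset.card_pair hil]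
    omega
  have hiJ : i ∉ J := fun h => by simpa using hJil h
  have hlJ : l ∉ J := fun h => by simpa using hJil h
  have hJ' : J.card + 1 = Fintype.card α := by rw [hJ, Nat.sub_add_cancel Fintype.card_pos]
  rw [div_le_iff₀' hα, ← hJ, ← Finset.card_compl, ← Finset.prod_const]
  refine le_trans ?_ (prod_half_influence_pow_le_defect hμ hβ hβμ hmarg hJ'
    (pivot := fun k => if k ∈ R then i else l) (fun k => by split_ifs <;> assumption) hK f)
  have hθ_le := le_influence_ite_ne hil hf hl hi
  gcongr with e
  exact hθ_le e

end MoreObjects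

section Coupling

variable {α T : Type*}

lemma exists_perm_smul_eq_of_ne {w w' : α × α} (hw : w.1 ≠ w.2) (hw' : w'.1 ≠ w'.2) :
    ∃ g : Equiv.Perm α, g • w = w' := by
  obtain ⟨g, h₁, h₂⟩ := MulAction.is_two_pretransitive_iff.1
    (Equiv.Perm.isMultiplyPretransitive α 2) hw hw'
  exact ⟨g, Prod.ext h₁ h₂⟩

lemma uniformOn_map_apply (g : Equiv.Perm α) (S : Finset α) (a : α) :
    uniformOn (S.map g.toEmbedding) (g a) = uniformOn S a := by
  rw [uniformOn, uniformOn, Finset.card_map, Finset.mem_map_equiv, Equiv.symm_apply_apply]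

variable [Fintype α]

lemma lawPreserving_uniformOn_univ {Z : Type*} [Fintype Z] [MulAction (Equiv.Perm α) Z]
    {μ : Z → ℝ} {φ : Z → α} (hμ : μ ∈ stdSimplex ℝ Z)
    (hinv : ∀ (g : Equiv.Perm α) (z : Z), μ (g • z) = μ z)
    (hφ : ∀ (g : Equiv.Perm α) (z : Z), φ (g • z) = g • φ z) :
    LawPreserving φ μ (uniformOn Finset.univ) :=
  lawPreserving_uniformOn_of_equivariant hμ hinv hφ (fun _ _ => Finset.mem_univ _)
    fun a _ b _ => MulAction.exists_smul_eq (Equiv.Perm α) a b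

lemma lawPreserving_uniformOn_offDiag {Z : Type*} [Fintype Z] [MulAction (Equiv.Perm α) Z]
    {μ : Z → ℝ} {φ : Z → α × α} (hμ : μ ∈ stdSimplex ℝ Z)
    (hinv : ∀ (g : Equiv.Perm α) (z : Z), μ (g • z) = μ z)
    (hφ : ∀ (g : Equiv.Perm α) (z : Z), φ (g • z) = g • φ z)
    (hne : ∀ z, 0 < μ z → (φ z).1 ≠ (φ z).2) :
    LawPreserving φ μ (uniformOn Finset.univ.offDiag) :=
  lawPreserving_uniformOn_of_equivariant hμ hinv hφ
    (fun z hz => Finset.mem_offDiag.2 ⟨Finset.mem_univ _, Finset.mem_univ _, hne z hz⟩)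
    fun _ hw _ hw' =>
      exists_perm_smul_eq_of_ne (Finset.mem_offDiag.1 hw).2.2 (Finset.mem_offDiag.1 hw').2.2

/-- The uniform law on pairs of points of `ι → α` that differ in every coordinate. -/
noncomputable def disjointPairs (ι α : Type*) [Fintype ι] [Fintype α] : (ι → α × α) → ℝ :=
  piLaw fun _ => uniformOn Finset.univ.offDiag

lemma uniformOn_offDiag_mem_stdSimplex [Nontrivial α] :
    uniformOn Finset.univ.offDiag ∈ stdSimplex ℝ (α × α) := by
  obtain ⟨a, b, hab⟩ := exists_pair_ne α
  exact uniformOn_mem_stdSimplex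
    ⟨(a, b), Finset.mem_offDiag.2 ⟨Finset.mem_univ a, Finset.mem_univ b, hab⟩⟩

lemma uniformOn_offDiag_smul (g : Equiv.Perm α) (w : α × α) :
    uniformOn Finset.univ.offDiag (g • w) = uniformOn Finset.univ.offDiag w := by
  simp [uniformOn]

variable {ι : Type*} [Fintype ι] [DecidableEq ι]

lemma disjointPairs_mem_stdSimplex [Nontrivial α] :
    disjointPairs ι α ∈ stdSimplex ℝ (ι → α × α) :=
  piLaw_mem_stdSimplex fun _ => uniformOn_offDiag_mem_stdSimplex

lemma lawPreserving_fst_disjointPairs [Nontrivial α] :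
    LawPreserving (fun w k => (w k).1) (disjointPairs ι α) (uniformPi ι α) :=
  LawPreserving.pi fun _ => lawPreserving_uniformOn_univ uniformOn_offDiag_mem_stdSimplex
    uniformOn_offDiag_smul fun _ _ => rfl

lemma lawPreserving_snd_disjointPairs [Nontrivial α] :
    LawPreserving (fun w k => (w k).2) (disjointPairs ι α) (uniformPi ι α) :=
  LawPreserving.pi fun _ => lawPreserving_uniformOn_univ uniformOn_offDiag_mem_stdSimplex
    uniformOn_offDiag_smul fun _ _ => rfl

lemma mean_disjointPairs_piecewise [Nontrivial α] (R : Finset ι) (F : (ι → α) → (ι → α) → ℝ) :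
    mean (disjointPairs ι α) (fun u => mean (disjointPairs ι α) fun v =>
        F (R.piecewise (fun k => (u k).1) fun k => (v k).1)
          (R.piecewise (fun k => (u k).2) fun k => (v k).2)) =
      mean (disjointPairs ι α) fun w => F (fun k => (w k).1) fun k => (w k).2 := by
  have hfst (u v : ι → α × α) : (fun k => (R.piecewise u v k).1) =
      R.piecewise (fun k => (u k).1) fun k => (v k).1 :=
    funext fun _ => apply_ite Prod.fst _ _ _
  have hsnd (u v : ι → α × α) : (fun k => (R.piecewise u v k).2) =
      R.piecewise (fun k => (u k).2) fun k => (v k).2 :=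
    funext fun _ => apply_ite Prod.snd _ _ _
  have h := mean_piLaw_piecewise (fun _ => uniformOn_offDiag_mem_stdSimplex (α := α)) R
    fun w : ι → α × α => F (fun k => (w k).1) fun k => (w k).2
  simp only [hfst, hsnd] at h
  rw [mean_comm]
  exact h

lemma compProd_uniformOn_univ_mem_stdSimplex [Nonempty α] :
    compProd (uniformOn Finset.univ) (fun _ => uniformOn Finset.univ) ∈ stdSimplex ℝ (α × α) :=
  compProd_mem_stdSimplex (uniformOn_mem_stdSimplex Finset.univ_nonempty)
    (fun _ => (uniformOn_mem_stdSimplex Finset.univ_nonempty).1)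
    fun _ _ => uniformOn_mem_stdSimplex Finset.univ_nonempty

variable [DecidableEq α]

/-- The law of two independent uniform points together with a uniform point distinct from both. -/
noncomputable def tripleLaw (α : Type*) [Fintype α] [DecidableEq α] : (α × α) × α → ℝ :=
  compProd (compProd (uniformOn Finset.univ) fun _ => uniformOn Finset.univ)
    fun w => uniformOn {w.1, w.2}ᶜ

lemma tripleLaw_smul (g : Equiv.Perm α) (w : (α × α) × α) :
    tripleLaw α (g • w) = tripleLaw α w := by
  have hmap : ({g w.1.1, g w.1.2}ᶜ : Finset α) =
      ({w.1.1, w.1.2}ᶜ : Finset α).map g.toEmbedding := by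
    ext c
    simp [Finset.mem_map_equiv, Equiv.symm_apply_eq]
  have huniv (a : α) : uniformOn Finset.univ (g a) = uniformOn Finset.univ a := by
    simp [uniformOn]
  simp only [tripleLaw, compProd, Prod.smul_fst, Prod.smul_snd, Equiv.Perm.smul_def, huniv, hmap,
    uniformOn_map_apply]

lemma mem_compl_of_tripleLaw_pos {w : (α × α) × α} (hw : 0 < tripleLaw α w) :
    w.2 ∈ ({w.1.1, w.1.2}ᶜ : Finset α) := by
  by_contra h
  exact hw.ne' (mul_eq_zero_of_right _ (by simp only [uniformOn, ind_of_false h, zero_div]))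

variable (hα : 3 ≤ Fintype.card α)
include hα

lemma uniformOn_compl_pair_mem_stdSimplex (w : α × α) :
    uniformOn ({w.1, w.2}ᶜ : Finset α) ∈ stdSimplex ℝ α := by
  refine uniformOn_mem_stdSimplex (Finset.card_pos.1 ?_)
  rw [Finset.card_compl]
  have := Finset.card_le_two (a := w.1) (b := w.2)
  omega

lemma tripleLaw_mem_stdSimplex : tripleLaw α ∈ stdSimplex ℝ ((α × α) × α) := by
  have : Nonempty α := Fintype.card_pos_iff.1 (by omega)
  have hcompl := uniformOn_compl_pair_mem_stdSimplex hα
  exact compProd_mem_stdSimplex compProd_uniformOn_univ_mem_stdSimplex (fun w => (hcompl w).1)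
    fun w _ => hcompl w

lemma lawPreserving_tripleLaw_left :
    LawPreserving (fun w => (w.1.1, w.2)) (tripleLaw α) (uniformOn Finset.univ.offDiag) :=
  lawPreserving_uniformOn_offDiag (tripleLaw_mem_stdSimplex hα) tripleLaw_smul (fun _ _ => rfl)
    fun w hw h => Finset.mem_compl.1 (mem_compl_of_tripleLaw_pos hw)
      (by simp [← show _ = w.2 from h])

lemma lawPreserving_tripleLaw_right :
    LawPreserving (fun w => (w.1.2, w.2)) (tripleLaw α) (uniformOn Finset.univ.offDiag) :=
  lawPreserving_uniformOn_offDiag (tripleLaw_mem_stdSimplex hα) tripleLaw_smul (fun _ _ => rfl)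
    fun w hw h => Finset.mem_compl.1 (mem_compl_of_tripleLaw_pos hw)
      (by simp [← show _ = w.2 from h])

omit [DecidableEq α] in
lemma mean_uniformPi_ne_le_two_mul (G H : (ι → α) → T) :
    mean (uniformPi ι α) (fun s => mean (uniformPi ι α) fun t => ind (G s ≠ G t)) ≤
      2 * mean (disjointPairs ι α) fun w => ind (G (fun k => (w k).1) ≠ H fun k => (w k).2) := by
  classical
  have : Nonempty α := Fintype.card_pos_iff.1 (by omega)
  have hτ := tripleLaw_mem_stdSimplex hα
  have hpair : LawPreserving (fun w k => (w k).1) (piLaw fun _ : ι => tripleLaw α)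
      (piLaw fun _ => compProd (uniformOn Finset.univ) fun _ => uniformOn Finset.univ) :=
    LawPreserving.pi fun _ => lawPreserving_fst_compProd
      compProd_uniformOn_univ_mem_stdSimplex fun w _ => uniformOn_compl_pair_mem_stdSimplex hα w
  have hleft := LawPreserving.pi fun _ : ι => lawPreserving_tripleLaw_left hα
  have hright := LawPreserving.pi fun _ : ι => lawPreserving_tripleLaw_right hα
  set F : (ι → α × α) → ℝ := fun w => ind (G (fun k => (w k).1) ≠ H fun k => (w k).2)
  calc mean (uniformPi ι α) (fun s => mean (uniformPi ι α) fun t => ind (G s ≠ G t))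
      = mean (piLaw fun _ => tripleLaw α) fun w =>
          ind (G (fun k => (w k).1.1) ≠ G fun k => (w k).1.2) := by
        rw [hpair fun w => ind (G (fun k => (w k).1) ≠ G fun k => (w k).2),
          mean_piLaw_compProd_const]
        rfl
    _ ≤ mean (piLaw fun _ => tripleLaw α) fun w =>
          F (fun k => ((w k).1.1, (w k).2)) + F fun k => ((w k).1.2, (w k).2) :=
        mean_mono (piLaw_mem_stdSimplex fun _ => hτ) fun w => ind_le_add fun hne => by
          by_contra! heq
          exact hne (heq.1.trans heq.2.symm)
    _ = 2 * mean (disjointPairs ι α) F := by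
        rw [mean_add, hleft, hright, two_mul, disjointPairs]

omit [DecidableEq α] in
theorem mean_uniformPi_ne_le_three_mul (G H : (ι → α) → T) :
    mean (uniformPi ι α) (fun s => mean (uniformPi ι α) fun t => ind (G s ≠ H t)) ≤
      3 * mean (disjointPairs ι α) fun w => ind (G (fun k => (w k).1) ≠ H fun k => (w k).2) := by
  have : Nontrivial α := Fintype.one_lt_card_iff_nontrivial.1 (by omega)
  have hU := uniformPi_mem_stdSimplex (ι := ι) (α := α)
  calc mean (uniformPi ι α) (fun s => mean (uniformPi ι α) fun t => ind (G s ≠ H t))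
      = mean (disjointPairs ι α) fun w => mean (uniformPi ι α) fun s =>
          ind (G s ≠ H fun k => (w k).2) := by
        rw [mean_comm]
        exact (lawPreserving_snd_disjointPairs _).symm
    _ ≤ mean (disjointPairs ι α) fun w => mean (uniformPi ι α) fun s =>
          ind (G s ≠ G fun k => (w k).1) + ind (G (fun k => (w k).1) ≠ H fun k => (w k).2) :=
        mean_mono disjointPairs_mem_stdSimplex fun w =>
          mean_mono hU fun s => ind_le_add fun hne => by
          by_contra! heq
          exact hne (heq.1.trans heq.2)
    _ = mean (uniformPi ι α) (fun t => mean (uniformPi ι α) fun s => ind (G s ≠ G t)) +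
          mean (disjointPairs ι α) fun w => ind (G (fun k => (w k).1) ≠ H fun k => (w k).2) := by
        simp only [mean_add, mean_const hU]
        rw [lawPreserving_fst_disjointPairs fun t => mean (uniformPi ι α) fun s => ind (G s ≠ G t)]
    _ ≤ _ := by
        rw [mean_comm]
        linarith [mean_uniformPi_ne_le_two_mul hα G H]

omit [DecidableEq α] in
theorem mean_uniformPi_sub_ne_le_nine_mul {M : Type*} [AddCommGroup M] (G H : (ι → α) → M)
    (R : Finset ι) :
    mean (uniformPi ι α) (fun s => mean (uniformPi ι α) fun t => mean (uniformPi ι α) fun a =>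
        mean (uniformPi ι α) fun b => ind (G (R.piecewise a s) - G (R.piecewise b s) ≠
          H (R.piecewise a t) - H (R.piecewise b t))) ≤
      9 * mean (disjointPairs ι α) fun w =>
        ind (G (fun k => (w k).1) - G (R.piecewise (fun k => (w k).2) fun k => (w k).1) ≠
          H (R.piecewise (fun k => (w k).1) fun k => (w k).2) - H fun k => (w k).2) := by
  have : Nontrivial α := Fintype.one_lt_card_iff_nontrivial.1 (by omega)
  have hU := uniformPi_mem_stdSimplex (ι := ι) (α := α)
  let P (s t a : ι → α) : M := G (R.piecewise a s) - H (R.piecewise a t)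
  let Q (K : (ι → α) → M) (u : ι → α × α) (s : ι → α) : M :=
    K (R.piecewise (fun k => (u k).1) s) - K (R.piecewise (fun k => (u k).2) s)
  calc _ = mean (uniformPi ι α) fun s => mean (uniformPi ι α) fun t =>
          mean (uniformPi ι α) fun a => mean (uniformPi ι α) fun b => ind (P s t a ≠ P s t b) := by
        simp only [P, ne_eq, sub_eq_sub_iff_sub_eq_sub]
    _ ≤ mean (uniformPi ι α) fun s => mean (uniformPi ι α) fun t =>
          3 * mean (disjointPairs ι α) fun u =>
            ind (P s t (fun k => (u k).1) ≠ P s t fun k => (u k).2) :=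
        mean_mono hU fun s => mean_mono hU fun t =>
          mean_uniformPi_ne_le_three_mul hα (P s t) (P s t)
    _ = 3 * mean (disjointPairs ι α) fun u => mean (uniformPi ι α) fun s =>
          mean (uniformPi ι α) fun t => ind (Q G u s ≠ Q H u t) := by
        simp only [mean_const_mul, P, Q, ne_eq, sub_eq_sub_iff_sub_eq_sub]
        simp only [mean_comm (uniformPi ι α) (disjointPairs ι α)]
    _ ≤ 3 * mean (disjointPairs ι α) fun u => 3 * mean (disjointPairs ι α) fun v =>
          ind (Q G u (fun k => (v k).1) ≠ Q H u fun k => (v k).2) :=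
        mul_le_mul_of_nonneg_left (mean_mono disjointPairs_mem_stdSimplex fun u =>
          mean_uniformPi_ne_le_three_mul hα (Q G u) (Q H u)) (by norm_num)
    _ = _ := by
        rw [mean_const_mul, ← mul_assoc, ← mean_disjointPairs_piecewise R fun x y =>
          ind (G x - G (R.piecewise y x) ≠ H (R.piecewise x y) - H y)]
        simp only [Q, Finset.piecewise_idem_left, Finset.piecewise_idem_right]
        norm_num

end Coupling

section AsManyObjects

variable {I α : Type*}

/-- The point mass at `c`, in a group in which the values of the aggregates can be added and
subtracted. -/
noncomputable def pointMass (c : α) : α →₀ ℤ := Finsupp.single c 1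

lemma pointMass_injective : Function.Injective (pointMass (α := α)) :=
  Finsupp.single_left_injective one_ne_zero

lemma eq_of_pointMass_sub_eq {a b c d : α}
    (h : pointMass a - pointMass b = pointMass c - pointMass d) (hab : a ≠ b) : a = c := by
  classical
  by_contra hac
  have := DFunLike.congr_fun h a
  simp only [pointMass, Finsupp.coe_sub, Pi.sub_apply, Finsupp.single_apply, hab.symm, Ne.symm hac,
    if_true, if_false] at this
  split_ifs at this <;> omega

lemma eq_of_pointMass_sub_eq_sub {a b c a₁ b₁ c₁ a₂ b₂ c₂ : α} (hab : a ≠ b)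
    (hb₁ : pointMass a - pointMass b = pointMass a₁ - pointMass b₁)
    (hb₂ : pointMass a - pointMass b = pointMass a₂ - pointMass b₂)
    (hc₁ : pointMass a - pointMass c = pointMass a₁ - pointMass c₁)
    (hc₂ : pointMass a - pointMass c = pointMass a₂ - pointMass c₂) : c₁ = c₂ := by
  have ha : a₁ = a₂ :=
    (eq_of_pointMass_sub_eq hb₁ hab).symm.trans (eq_of_pointMass_sub_eq hb₂ hab)
  exact pointMass_injective (sub_right_injective (hc₁.symm.trans (by rw [hc₂, ha])))

variable [Fintype α]

theorem influence_mul_influence_compl_le {ι : Type*} [Fintype ι] [DecidableEq ι] [Nonempty α]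
    (f g : (ι → α) → α) (R : Finset ι) :
    influence f R * influence g Rᶜ ≤ 4 * mean (uniformPi ι α) fun s => mean (uniformPi ι α) fun t =>
      mean (uniformPi ι α) fun a => mean (uniformPi ι α) fun b =>
        ind (pointMass (f (R.piecewise a s)) - pointMass (f (R.piecewise b s)) ≠
          pointMass (g (R.piecewise a t)) - pointMass (g (R.piecewise b t))) := by
  have hU := uniformPi_mem_stdSimplex (ι := ι) (α := α)
  let Bad (s t a b : ι → α) : Prop :=
    pointMass (f (R.piecewise a s)) - pointMass (f (R.piecewise b s)) ≠
      pointMass (g (R.piecewise a t)) - pointMass (g (R.piecewise b t))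
  have hle (x s t a b c : ι → α) :
      ind (f (R.piecewise a x) ≠ f (R.piecewise b x)) *
        ind (g (R.piecewise c s) ≠ g (R.piecewise c t)) ≤
      ind (Bad x s a b) + ind (Bad x t a b) + (ind (Bad x s a c) + ind (Bad x t a c)) := by
    rw [ind_mul]
    refine (ind_le_add fun h => ?_).trans (add_le_add (ind_le_add id) (ind_le_add id))
    by_contra! hgood
    simp only [Bad, not_not] at hgood
    obtain ⟨⟨hb₁, hb₂⟩, hc₁, hc₂⟩ := hgood
    exact h.2 (eq_of_pointMass_sub_eq_sub h.1 hb₁ hb₂ hc₁ hc₂)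
  have hg : influence g Rᶜ = mean (uniformPi ι α) fun s => mean (uniformPi ι α) fun t =>
      mean (uniformPi ι α) fun c => ind (g (R.piecewise c s) ≠ g (R.piecewise c t)) := by
    rw [influence_eq_mean_three, mean_comm]
    simp only [Finset.piecewise_compl]
    exact congrArg _ (funext fun s => mean_comm _ _ _)
  calc influence f R * influence g Rᶜ
      = mean (uniformPi ι α) fun x => mean (uniformPi ι α) fun s => mean (uniformPi ι α) fun t =>
          mean (uniformPi ι α) fun a => mean (uniformPi ι α) fun b => mean (uniformPi ι α) fun c =>
            ind (f (R.piecewise a x) ≠ f (R.piecewise b x)) *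
              ind (g (R.piecewise c s) ≠ g (R.piecewise c t)) := by
        rw [influence_eq_mean_three, hg]
        simp only [mean_const_mul, mean_mul_const]
    _ ≤ mean (uniformPi ι α) fun x => mean (uniformPi ι α) fun s => mean (uniformPi ι α) fun t =>
          mean (uniformPi ι α) fun a => mean (uniformPi ι α) fun b => mean (uniformPi ι α) fun c =>
            ind (Bad x s a b) + ind (Bad x t a b) + (ind (Bad x s a c) + ind (Bad x t a c)) :=
        mean_mono hU fun x => mean_mono hU fun s => mean_mono hU fun t => mean_mono hU fun a =>
          mean_mono hU fun b => mean_mono hU fun c => hle x s t a b c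
    _ = _ := by
        simp only [mean_add, mean_const hU]
        ring

variable [Fintype I] {l j : I}

lemma pointMass_add_eq_of_surjective {g h : I → α} (hcard : Fintype.card I = Fintype.card α)
    (hg : Function.Surjective g) (hh : Function.Surjective h) (hlj : l ≠ j)
    (heq : ∀ i, i ≠ l ∧ i ≠ j → g i = h i) :
    pointMass (g l) + pointMass (g j) = pointMass (h l) + pointMass (h j) := by
  classical
  have hsum {x : I → α} (hx : Function.Surjective x) :
      ∑ i, pointMass (x i) = ∑ c, pointMass c :=
    (hx.bijective_of_nat_card_le (by simp [hcard])).sum_comp pointMass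
  have hdiff : ∑ i, (pointMass (g i) - pointMass (h i)) = 0 := by
    rw [Finset.sum_sub_distrib, hsum hg, hsum hh, sub_self]
  rw [Fintype.sum_eq_add l j hlj fun i hi => by rw [heq i hi, sub_self]] at hdiff
  rwa [← sub_eq_zero, add_sub_add_comm]

variable [DecidableEq I] {μ : (I → α) → ℝ}

lemma map_comp_perm_of_card_eq (hμ : μ ∈ stdSimplex ℝ (I → α))
    (hsupp : ∀ x, 0 < μ x → Function.Surjective x) (hinv : ∀ (g : Equiv.Perm α) x, μ (g • x) = μ x)
    (hcard : Fintype.card I = Fintype.card α) (σ : Equiv.Perm I) (x : I → α) :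
    μ (x ∘ σ) = μ x := by
  have hzero (y : I → α) (hy : ¬Function.Surjective y) : μ y = 0 :=
    ((hμ.1 y).eq_or_lt.resolve_right fun h => hy (hsupp y h)).symm
  by_cases hx : Function.Surjective x
  · let e : I ≃ α := Equiv.ofBijective x (hx.bijective_of_nat_card_le (by simp [hcard]))
    have he : (e.symm.trans (σ.trans e) : Equiv.Perm α) • x = x ∘ σ :=
      funext fun i => congrArg (fun i => x (σ i)) (e.symm_apply_apply i)
    rw [← he, hinv]
  · rw [hzero x hx, hzero (x ∘ σ) (by rwa [σ.surjective_comp])]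

lemma lawPreserving_comp_perm_of_card_eq (hμ : μ ∈ stdSimplex ℝ (I → α))
    (hsupp : ∀ x, 0 < μ x → Function.Surjective x) (hinv : ∀ (g : Equiv.Perm α) x, μ (g • x) = μ x)
    (hcard : Fintype.card I = Fintype.card α) (σ : Equiv.Perm I) :
    LawPreserving (fun x => x ∘ σ) μ μ := fun g =>
  Fintype.sum_equiv (σ.symm.arrowCongr (Equiv.refl α)) _ _ fun x =>
    congrArg (· * g (x ∘ σ)) (map_comp_perm_of_card_eq hμ hsupp hinv hcard σ x).symm

theorem mean_disjointPairs_swap_le_defect {p : ℕ} (hμ : μ ∈ stdSimplex ℝ (I → α))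
    (hsupp : ∀ x, 0 < μ x → Function.Surjective x) (hinv : ∀ (g : Equiv.Perm α) x, μ (g • x) = μ x)
    (hcard : Fintype.card I = Fintype.card α) (hlj : l ≠ j) (f : I → (Fin p → α) → α)
    (R : Finset (Fin p)) :
    (mean (disjointPairs (Fin p) α) fun w =>
      ind (pointMass (f l fun k => (w k).1) -
          pointMass (f l (R.piecewise (fun k => (w k).2) fun k => (w k).1)) ≠
        pointMass (f j (R.piecewise (fun k => (w k).1) fun k => (w k).2)) -
          pointMass (f j fun k => (w k).2))) ≤ 2 * defect μ f := by
  have hpair : LawPreserving (fun x k => (x k l, x k j)) (piLaw fun _ : Fin p => μ)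
      (disjointPairs (Fin p) α) := LawPreserving.pi (φ := fun _ y => (y l, y j)) fun _ =>
    lawPreserving_uniformOn_offDiag hμ hinv (fun _ _ => rfl) fun x hx =>
      ((hsupp x hx).bijective_of_nat_card_le (by simp [hcard])).injective.ne hlj
  let σ (k : Fin p) : Equiv.Perm I := if k ∈ R then Equiv.swap l j else 1
  have hσ (x : Fin p → I → α) (i : I) : (fun k => x k (σ k i)) =
      R.piecewise (fun k => x k (Equiv.swap l j i)) fun k => x k i := by
    ext k
    by_cases hk : k ∈ R <;> simp [σ, hk]
  have hdefect : (mean (piLaw fun _ : Fin p => μ) fun x =>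
      ind ¬Function.Surjective fun i => f i fun k => x k (σ k i)) = defect μ f :=
    LawPreserving.pi (fun k => lawPreserving_comp_perm_of_card_eq hμ hsupp hinv hcard (σ k))
      fun x => ind ¬Function.Surjective fun i => f i fun k => x k i
  rw [← hpair]
  calc _ ≤ mean (piLaw fun _ : Fin p => μ) fun x =>
          ind (¬Function.Surjective fun i => f i fun k => x k i) +
            ind (¬Function.Surjective fun i => f i fun k => x k (σ k i)) :=
        mean_mono (piLaw_mem_stdSimplex fun _ => hμ) fun x => ind_le_add fun hne => by
          by_contra! hsurj
          have hadd := pointMass_add_eq_of_surjective hcard hsurj.1 hsurj.2 hlj fun i hi => by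
            rw [hσ, Equiv.swap_apply_of_ne_of_ne hi.1 hi.2, Finset.piecewise_same]
          rw [hσ, hσ, Equiv.swap_apply_left, Equiv.swap_apply_right] at hadd
          exact hne (sub_eq_sub_iff_add_eq_add.2 (hadd.trans (add_comm _ _)))
    _ = 2 * defect μ f := by
        rw [mean_add, hdefect, two_mul, defect]

theorem influence_mul_influence_compl_le_defect {p : ℕ} (hμ : μ ∈ stdSimplex ℝ (I → α))
    (hsupp : ∀ x, 0 < μ x → Function.Surjective x) (hinv : ∀ (g : Equiv.Perm α) x, μ (g • x) = μ x)
    (hcard : Fintype.card I = Fintype.card α) (hα : 3 ≤ Fintype.card α) (hlj : l ≠ j)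
    (f : I → (Fin p → α) → α) (R : Finset (Fin p)) :
    influence (f l) R * influence (f j) Rᶜ ≤ 72 * defect μ f := by
  have : Nonempty α := Fintype.card_pos_iff.1 (by omega)
  have hfour := influence_mul_influence_compl_le (f l) (f j) R
  have hpairs := mean_uniformPi_sub_ne_le_nine_mul hα (fun x => pointMass (f l x))
    (fun x => pointMass (f j x)) R
  have hswap := mean_disjointPairs_swap_le_defect hμ hsupp hinv hcard hlj f R
  linarith

theorem hasInfluenceDichotomy_of_card_eq (hμ : μ ∈ stdSimplex ℝ (I → α))
    (hsupp : ∀ x, 0 < μ x → Function.Surjective x) (hinv : ∀ (g : Equiv.Perm α) x, μ (g • x) = μ x)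
    (hcard : Fintype.card I = Fintype.card α) (hα : 3 ≤ Fintype.card α) :
    HasInfluenceDichotomy μ := by
  intro θ hθ
  refine ⟨θ ^ 2 / 72, by positivity, fun p f _ R i l hil hl hi => ?_⟩
  have := influence_mul_influence_compl_le_defect hμ hsupp hinv hcard hα hil.symm f R
  nlinarith [mul_le_mul hl hi hθ.le (hθ.le.trans hl)]

end AsManyObjects

section Dictator

variable {ι : Type*} [Fintype ι] [DecidableEq ι]

lemma exists_compl_singleton_of_dichotomy {small : Finset ι → Prop} (hempty : small ∅)
    (hdich : ∀ R, small R ∨ small Rᶜ)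
    (hunion : ∀ A B, Disjoint A B → small A → small B → ¬small (A ∪ B)ᶜ) : ∃ k, small {k}ᶜ := by
  obtain ⟨R, hR⟩ := exists_minimal_of_wellFoundedLT (fun R : Finset ι => small Rᶜ)
    ⟨Finset.univ, by rwa [Finset.compl_univ]⟩
  obtain rfl | ⟨k, hk⟩ := R.eq_empty_or_nonempty
  · exact absurd hR.prop (hunion ∅ ∅ (Finset.disjoint_empty_left _) hempty hempty)
  · refine ⟨k, (hdich {k}).resolve_left fun hsingle => ?_⟩
    have herase : small (R.erase k) :=
      (hdich _).resolve_right (hR.not_prop_of_lt (Finset.erase_ssubset hk))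
    refine hunion {k} (R.erase k) (by simp) hsingle herase ?_
    rw [← Finset.insert_eq, Finset.insert_erase hk]
    exact hR.prop

variable {I α T : Type*} [Fintype α] [Nonempty α]

theorem exists_influence_compl_singleton_le [Nontrivial I] {f : I → (ι → α) → T} {κ : ℝ}
    (hκ : 0 ≤ κ) (hf : ∀ i, 3 * κ < influence (f i) Finset.univ)
    (hdich : ∀ R i l, i ≠ l → influence (f l) R ≤ κ ∨ influence (f i) Rᶜ ≤ κ) :
    ∃ k, ∀ i, influence (f i) {k}ᶜ ≤ κ := by
  refine exists_compl_singleton_of_dichotomy (small := fun R => ∀ i, influence (f i) R ≤ κ)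
    (fun i => by rwa [influence_empty]) (fun R => ?_) fun A B hAB hA hB hcompl => ?_
  · by_contra! hnot
    obtain ⟨⟨l, hl⟩, i, hi⟩ := hnot
    obtain rfl : i = l := by
      by_contra hil
      exact (hdich R i l hil).elim hl.not_ge hi.not_ge
    obtain ⟨j, hj⟩ := exists_ne i
    have hjR : influence (f j) R ≤ κ := (hdich R i j hj.symm).resolve_right hi.not_ge
    have hjR' : influence (f j) Rᶜ ≤ κ := (hdich R j i hj).resolve_left hl.not_ge
    linarith [hf j, influence_univ_le (f j) R]
  · obtain ⟨i⟩ : Nonempty I := inferInstance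
    linarith [hf i, influence_univ_le (f i) (A ∪ B), influence_union_le (f i) hAB, hA i, hB i,
      hcompl i]

end Dictator

section ExactDictator

variable {I α : Type*} [Fintype I] [Fintype α]

lemma exists_injective_apply_eq (hcard : Fintype.card α ≤ Fintype.card I) {i j : I} {a b : α}
    (hij : i ≠ j) (hab : a ≠ b) : ∃ e : α → I, Function.Injective e ∧ e a = i ∧ e b = j := by
  obtain ⟨e⟩ := Function.Embedding.nonempty_of_card_le hcard
  obtain ⟨g, hg⟩ := exists_perm_smul_eq_of_ne (w := (e a, e b)) (w' := (i, j))
    (e.injective.ne hab) hij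
  exact ⟨fun c => g (e c), g.injective.comp e.injective, congrArg Prod.fst hg,
    congrArg Prod.snd hg⟩

variable {φ : I → α → α} (hφ : ∀ i c, ∃ a, φ i a ≠ c)
  (hsurj : ∀ x : I → α, Function.Surjective x → Function.Surjective fun i => φ i (x i))
include hφ hsurj

omit [Fintype I] [Fintype α] in
lemma surjective_apply_of_injective {e : α → I} (he : Function.Injective e) :
    Function.Surjective fun a => φ (e a) a := by
  intro c
  choose avoid havoid using fun i => hφ i c
  obtain ⟨i, hi⟩ := hsurj (Function.extend e id avoid)
    (fun a => ⟨e a, he.extend_apply id avoid a⟩) c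
  by_cases h : ∃ a, e a = i
  · obtain ⟨a, rfl⟩ := h
    exact ⟨a, by simpa only [he.extend_apply, id] using hi⟩
  · simp only [Function.extend_apply' _ _ _ h] at hi
    exact absurd hi (havoid i)

variable (hcard : Fintype.card α ≤ Fintype.card I)
include hcard

lemma apply_ne_apply_of_ne {i j : I} {a b : α} (hij : i ≠ j) (hab : a ≠ b) : φ i a ≠ φ j b := by
  obtain ⟨e, he, rfl, rfl⟩ := exists_injective_apply_eq hcard hij hab
  exact (Finite.injective_iff_surjective.2 (surjective_apply_of_injective hφ hsurj he)).ne hab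

lemma apply_eq_apply (i j : I) (a : α) : φ i a = φ j a := by
  rcases eq_or_ne i j with rfl | hij
  · rfl
  obtain ⟨b, hb⟩ := hφ i (φ i a)
  obtain ⟨e, he, rfl, rfl⟩ := exists_injective_apply_eq hcard hij fun hba => hb (congrArg _ hba)
  obtain ⟨d, hd⟩ := surjective_apply_of_injective hφ hsurj he (φ (e b) a)
  rcases eq_or_ne d a with rfl | hda
  · exact hd.symm
  rcases eq_or_ne d b with rfl | hdb
  · exact absurd hd hb
  · exact absurd hd (apply_ne_apply_of_ne hφ hsurj hcard (he.ne hdb) hda)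

theorem exists_perm_forall_apply_eq [Nontrivial I] : ∃ π : Equiv.Perm α, ∀ i a, φ i a = π a := by
  obtain ⟨i, j, hij⟩ := exists_pair_ne I
  have hinj : Function.Injective (φ i) := fun a b hab => by
    by_contra hne
    exact apply_ne_apply_of_ne hφ hsurj hcard hij hne
      (hab.trans (apply_eq_apply hφ hsurj hcard i j b))
  exact ⟨Equiv.ofBijective (φ i) (Finite.injective_iff_bijective.1 hinj), fun l a =>
    apply_eq_apply hφ hsurj hcard l i a⟩

end ExactDictator

section NearDictator

variable {I α : Type*} [Fintype I] [DecidableEq I] [Fintype α] {μ : (I → α) → ℝ}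
  {p : ℕ} {f : I → (Fin p → α) → α} {φ : I → α → α} {k : Fin p}

lemma mean_not_surjective_le (hμ : μ ∈ stdSimplex ℝ (I → α))
    (hmarg : ∀ i, LawPreserving (fun x => x i) μ (uniformOn Finset.univ)) :
    (mean μ fun x => ind ¬Function.Surjective fun i => φ i (x i)) ≤
      defect μ f + ∑ i, mean (uniformPi (Fin p) α) fun x => ind (f i x ≠ φ i (x k)) := by
  have hmarg' (i : I) : LawPreserving (fun (x : Fin p → I → α) k => x k i) (piLaw fun _ => μ)
      (uniformPi (Fin p) α) := LawPreserving.pi (φ := fun _ (x : I → α) => x i) fun _ => hmarg i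
  calc (mean μ fun x => ind ¬Function.Surjective fun i => φ i (x i))
      = mean (piLaw fun _ : Fin p => μ) fun x =>
          ind ¬Function.Surjective fun i => φ i (x k i) :=
        (lawPreserving_eval (fun _ => hμ) k _).symm
    _ ≤ mean (piLaw fun _ : Fin p => μ) fun x =>
          ind (¬Function.Surjective fun i => f i fun k => x k i) +
            ∑ i, ind (f i (fun k => x k i) ≠ φ i (x k i)) :=
        mean_mono (piLaw_mem_stdSimplex fun _ => hμ) fun x => by
          refine (ind_le_add fun hnot => ?_).trans (add_le_add_right (ind_exists_le_sum _) _)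
          by_contra! hcon
          simp only [← hcon.2] at hnot
          exact hnot hcon.1
    _ = _ := by
        rw [mean_add, mean_sum, defect]
        exact congrArg _ (Finset.sum_congr rfl fun i _ => hmarg' i fun x => ind (f i x ≠ φ i (x k)))

lemma surjective_apply_of_near (hμ : μ ∈ stdSimplex ℝ (I → α)) {β κ : ℝ} (hβ : 0 < β)
    (hβμ : ∀ x, Function.Surjective x → β ≤ μ x)
    (hmarg : ∀ i, LawPreserving (fun x => x i) μ (uniformOn Finset.univ))
    (hφ : ∀ i, mean (uniformPi (Fin p) α) (fun x => ind (f i x ≠ φ i (x k))) ≤ κ)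
    (hlt : defect μ f + Fintype.card I * κ < β) {x : I → α} (hx : Function.Surjective x) :
    Function.Surjective fun i => φ i (x i) := by
  by_contra hnot
  have hlower := mul_le_mean_of_le hμ hβ (hβμ x hx)
    (F := fun x => ind ¬Function.Surjective fun i => φ i (x i)) fun _ _ => ind_nonneg _
  have hupper := mean_not_surjective_le (f := f) (φ := φ) (k := k) hμ hmarg
  have hsum := Finset.sum_le_card_nsmul Finset.univ _ κ fun i _ => hφ i
  rw [ind_of_true hnot, mul_one] at hlower
  rw [nsmul_eq_mul, Finset.card_univ] at hsum
  linarith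

variable [Nonempty α]

lemma exists_apply_ne_of_near {κ : ℝ} {f : (Fin p → α) → α} {φ : α → α}
    (hφ : mean (uniformPi (Fin p) α) (fun x => ind (f x ≠ φ (x k))) ≤ κ)
    (hf : ∀ c, mean (uniformPi (Fin p) α) (fun x => ind (f x = c)) < 1 - κ) (c : α) :
    ∃ a, φ a ≠ c := by
  by_contra! hc
  simp only [hc, ne_eq, ind_not, mean_sub, mean_const uniformPi_mem_stdSimplex] at hφ
  linarith [hf c]

theorem exists_perm_of_hasInfluenceDichotomy [Nontrivial I] (hμ : μ ∈ stdSimplex ℝ (I → α))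
    {β ε : ℝ} (hβ : 0 < β) (hβμ : ∀ x, Function.Surjective x → β ≤ μ x)
    (hmarg : ∀ i, LawPreserving (fun x => x i) μ (uniformOn Finset.univ))
    (hcard : Fintype.card α ≤ Fintype.card I) (hdich : HasInfluenceDichotomy μ) (hε : 0 < ε) :
    ∃ δ > 0, ∀ (p : ℕ) (f : I → (Fin p → α) → α), defect μ f ≤ δ →
      (∀ i c, mean (uniformPi (Fin p) α) (fun x => ind (f i x = c)) < 1 - ε) →
      ∃ (k : Fin p) (π : Equiv.Perm α), ∀ i,
        1 - ε ≤ mean (uniformPi (Fin p) α) fun x => ind (f i x = π (x k)) := by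
  have hI : (0 : ℝ) < 2 * Fintype.card I := mul_pos two_pos (Nat.cast_pos.2 Fintype.card_pos)
  set κ := min (ε / 4) (β / (2 * Fintype.card I))
  have hκ : 0 < κ := lt_min (by positivity) (div_pos hβ hI)
  have hκε : κ ≤ ε / 4 := min_le_left _ _
  have hκβ : κ * (2 * Fintype.card I) ≤ β := (le_div_iff₀ hI).1 (min_le_right _ _)
  obtain ⟨δ, hδ, hdich⟩ := hdich κ hκ
  refine ⟨min (δ / 2) (β / 3), by positivity, fun p f hdefect hf => ?_⟩
  have hdefectδ := hdefect.trans (min_le_left _ _)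
  have hdefectβ := hdefect.trans (min_le_right _ _)
  have hf_influence (i : I) : ε < influence (f i) Finset.univ := lt_influence_univ (hf i)
  obtain ⟨k, hk⟩ := exists_influence_compl_singleton_le hκ.le
    (fun i => by linarith [hf_influence i]) fun R i l hil => by
      by_contra! hlarge
      have := hdich p f (fun i => by linarith [hf_influence i]) R i l hil hlarge.1.le hlarge.2.le
      linarith
  choose φ hφ using fun i => exists_mean_ne_le_influence (f i) k
  have hφκ (i : I) := (hφ i).trans (hk i)
  obtain ⟨π, hπ⟩ := exists_perm_forall_apply_eq
    (fun i => exists_apply_ne_of_near (hφκ i) fun c => by linarith [hf i c])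
    (fun x hx => surjective_apply_of_near hμ hβ hβμ hmarg hφκ (by linarith) hx) hcard
  refine ⟨k, π, fun i => ?_⟩
  have := hφκ i
  simp only [hπ, ne_eq, ind_not, mean_sub, mean_const uniformPi_mem_stdSimplex] at this
  linarith

end NearDictator

section Probability

lemma unifPr_eq_mean {ι α : Type*} [Fintype α] [Fintype ι] [DecidableEq ι] (P : (ι → α) → Prop) :
    unifPr P = mean (uniformPi ι α) fun x => ind (P x) := by
  classical
  simp [unifPr, uniformPi, piLaw, uniformOn, mean, ind, Fintype.card_subtype, Finset.sum_ite,
    div_eq_mul_inv]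

lemma prodPr_eq_mean {Z : Type*} [Fintype Z] (μ : Z → ℝ) (p : ℕ) (P : (Fin p → Z) → Prop) :
    prodPr μ p P = mean (piLaw fun _ => μ) fun x => ind (P x) := by
  simp only [prodPr, mean, piLaw, ind, mul_ite, mul_one, mul_zero]

lemma prodPr_eq_one_sub_defect {I α : Type*} [Fintype I] [DecidableEq I] [Fintype α]
    {μ : (I → α) → ℝ} (hμ : μ ∈ stdSimplex ℝ (I → α)) {p : ℕ} (f : I → (Fin p → α) → α) :
    prodPr μ p (fun x => Function.Surjective fun i => f i fun k => x k i) = 1 - defect μ f := by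
  rw [prodPr_eq_mean, defect]
  simp only [ind_not, mean_sub, mean_const (piLaw_mem_stdSimplex fun _ => hμ), sub_sub_cancel]

lemma exists_pos_forall_le_of_pos {Z : Type*} [Finite Z] {P : Z → Prop} {μ : Z → ℝ}
    (h : ∀ z, P z → 0 < μ z) : ∃ β > 0, ∀ z, P z → β ≤ μ z := by
  rcases isEmpty_or_nonempty {z // P z} with hP | hP
  · exact ⟨1, one_pos, fun z hz => (hP.false ⟨z, hz⟩).elim⟩
  · obtain ⟨z₀, hz₀⟩ := Finite.exists_min fun z : {z // P z} => μ z
    exact ⟨μ z₀, h z₀ z₀.2, fun z hz => hz₀ ⟨z, hz⟩⟩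

end Probability

/-- approximate surjective classification aggregation implies closeness to a
dictatorship composed with a permutation of the categories. -/
theorem stmt0 (m n : ℕ) (hnm : n ≤ m) (hn : 2 ≤ n) (hne : ¬(m = 2 ∧ n = 2))
    (μ : (Fin m → Fin n) → ℝ)
    (hnonneg : ∀ x, 0 ≤ μ x)
    (hsum : ∑ x : Fin m → Fin n, μ x = 1)
    (hsupp : ∀ x : Fin m → Fin n, 0 < μ x ↔ Function.Surjective x)
    (hinv : ∀ π : Equiv.Perm (Fin n), ∀ x : Fin m → Fin n,
      μ (fun i => π (x i)) = μ x) :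
    ∃ ε₀ > (0 : ℝ), ∀ ε : ℝ, 0 < ε → ε < ε₀ → ∃ δ > (0 : ℝ), ∀ p : ℕ,
      ∀ f : Fin m → (Fin p → Fin n) → Fin n,
        prodPr μ p (fun xs => Function.Surjective (fun i => f i (fun k => xs k i)))
            ≥ 1 - δ →
        (∀ i : Fin m, ∀ c : Fin n,
          unifPr (fun x : Fin p → Fin n => f i x = c) < 1 - ε) →
        ∃ k : Fin p, ∃ π : Equiv.Perm (Fin n), ∀ i : Fin m,
          unifPr (fun x : Fin p → Fin n => f i x = π (x k)) ≥ 1 - ε := by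
  have : Nontrivial (Fin m) := Fin.nontrivial_iff_two_le.2 (hn.trans hnm)
  have : Nontrivial (Fin n) := Fin.nontrivial_iff_two_le.2 hn
  have hμ : μ ∈ stdSimplex ℝ (Fin m → Fin n) := ⟨hnonneg, hsum⟩
  have hmarg (i : Fin m) : LawPreserving (fun x => x i) μ (uniformOn Finset.univ) :=
    lawPreserving_uniformOn_univ hμ hinv fun _ _ => rfl
  obtain ⟨β, hβ, hβμ⟩ := exists_pos_forall_le_of_pos fun x => (hsupp x).2
  have hdich : HasInfluenceDichotomy μ := by
    rcases hnm.lt_or_eq with hlt | rfl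
    · exact hasInfluenceDichotomy_of_card_lt hμ hβ hβμ hmarg (by simpa using hlt)
    · exact hasInfluenceDichotomy_of_card_eq hμ (fun x => (hsupp x).1) hinv rfl
        (by rw [Fintype.card_fin]; omega)
  refine ⟨1, one_pos, fun ε hε _ => ?_⟩
  obtain ⟨δ, hδ, h⟩ := exists_perm_of_hasInfluenceDichotomy hμ hβ hβμ hmarg (by simpa using hnm)
    hdich hε
  refine ⟨δ, hδ, fun p f hsurj hf => ?_⟩
  simp only [unifPr_eq_mean, prodPr_eq_one_sub_defect hμ] at hsurj hf ⊢
  exact h p f (by linarith) hf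
end

section
/- Let m ≥ n ≥ 2 with (m,n) ≠ (2,2). If f_1,…,f_m : [n]^p → [n] constitute a polymorphism of Surj_{m,n}, then one of the following holds: (i) there exist k ∈ [p] and a permutation π of [n] such that f_1(x) = ⋯ = f_m(x) = π(x_k) for all x ∈ [n]^p; or (ii) for each j ∈ [n] there exists i ∈ [m] such that f_i(x) = j for all x ∈ [n]^p. -/
/-!
Call a value `j` certified if some `f i` is constantly `j`. Choosing rows that avoid uncertified
values shows that a polymorphism stays a polymorphism when restricted to any set of positions that
retains every certificate.

Restricting to as many positions as there are categories makes surjective columns permutations.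
Exchanging two entries in some of the columns then yields the exchange principle: if `y` and `z`
differ in every coordinate and every coordinate of `x` is taken from `y` or `z`, then
`f c x ∈ {f c y, f d z}` for `c ≠ d`. If `f d` is constant, this forces all the other functions to
be constant, so one certificate entails a full set of them. If there are no certificates, it shows
that `f i x ≠ f i y` makes `f i x` depend only on the coordinates where `x` and `y` differ; taking
`x` and `y` to differ in one coordinate exhibits the dictator.
-/

open Function

section Selection

variable {α β κ : Type*}

theorem injective_vecCons_pair {a b : α} (hab : a ≠ b) : Injective ![a, b] := by
  simpa [Injective, Fin.forall_fin_two] using ⟨hab, hab.symm⟩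

theorem injective_vecCons_triple {a b c : α} (hab : a ≠ b) (hac : a ≠ c) (hbc : b ≠ c) :
    Injective ![a, b, c] := by
  simpa [Injective, Fin.forall_fin_succ] using
    ⟨⟨hab, hac⟩, ⟨hab.symm, hbc⟩, hac.symm, hbc.symm⟩

theorem eq_of_ne_of_ne_of_card_lt_three (hα : ENat.card α < 3) {a b c : α} (hac : a ≠ c)
    (hbc : b ≠ c) : a = b := by
  by_contra hab
  have hle := ENat.card_le_card_of_injective (injective_vecCons_triple hab hac hbc)
  exact hle.not_gt (by simpa using hα)

theorem exists_perm_apply_eq_and_apply_eq {c d a b : α} (hcd : c ≠ d) (hab : a ≠ b) :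
    ∃ σ : Equiv.Perm α, σ c = a ∧ σ d = b := by
  obtain ⟨σ, hσ⟩ := Equiv.Perm.exists_extending_pair ![c, d] ![a, b]
    (injective_vecCons_pair hcd) (injective_vecCons_pair hab)
  exact ⟨σ, hσ 0, hσ 1⟩

theorem exists_embedding_apply_eq_and_apply_eq (e : α ↪ β) {c d : α} {a b : β} (hcd : c ≠ d)
    (hab : a ≠ b) : ∃ e' : α ↪ β, e' c = a ∧ e' d = b := by
  obtain ⟨σ, hc, hd⟩ := exists_perm_apply_eq_and_apply_eq (e.injective.ne hcd) hab
  exact ⟨e.trans σ.toEmbedding, hc, hd⟩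

theorem exists_perms_eq_off_pair {c d x y z : α} (hcd : c ≠ d) (hyz : y ≠ z)
    (hx : x = y ∨ x = z) :
    ∃ σ τ : Equiv.Perm α, σ c = x ∧ τ c = y ∧ τ d = z ∧ ∀ b, b ≠ c → b ≠ d → σ b = τ b := by
  classical
  obtain ⟨τ, hc, hd⟩ := exists_perm_apply_eq_and_apply_eq hcd hyz
  rcases hx with rfl | rfl
  · exact ⟨τ, τ, hc, hc, hd, fun _ _ _ => rfl⟩
  · refine ⟨(Equiv.swap c d).trans τ, τ, by simpa using hd, hc, hd, fun b hbc hbd => ?_⟩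
    rw [Equiv.trans_apply, Equiv.swap_apply_of_ne_of_ne hbc hbd]

theorem exists_forall_ne_eq_and_apply_ne [Finite κ] {g : (κ → α) → β} {x y : κ → α}
    (hxy : g x ≠ g y) : ∃ k u v, (∀ l, l ≠ k → u l = v l) ∧ g u ≠ g v := by
  classical
  have := Fintype.ofFinite κ
  by_contra! hg
  have hupdate (u : κ → α) (k : κ) (a : α) : g (update u k a) = g u :=
    hg k _ _ fun l hl => update_of_ne hl a u
  have hpiecewise (s : Finset κ) : g (s.piecewise x y) = g y := by
    induction s using Finset.induction_on with
    | empty => rw [Finset.piecewise_empty]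
    | insert k s _ ih => rw [Finset.piecewise_insert, hupdate, ih]
  exact hxy (by simpa using hpiecewise Finset.univ)

end Selection

variable {ι κ α : Type*}

/-- The family `f` is a polymorphism of the surjectivity predicate on `ι → α`: applying it row by
row to a matrix (with rows indexed by `ι` and columns by `κ`) whose columns are all surjective
yields a surjective column. -/
def IsSurjPolymorphism (f : ι → (κ → α) → α) : Prop :=
  ∀ xs : κ → ι → α, (∀ k, Surjective (xs k)) → Surjective fun i => f i fun k => xs k i

/-- The value `j` is certified by the family `f`: some member of `f` is constantly equal to `j`. A
family certifying every value is a certificate in the sense of alternative (ii). -/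
def IsCertified (f : ι → (κ → α) → α) (j : α) : Prop :=
  ∃ i, ∀ x, f i x = j

theorem exists_embedding_forall_isCertified_apply_eq [Finite α] (f : ι → (κ → α) → α)
    (e : α ↪ ι) : ∃ e' : α ↪ ι, ∀ j, IsCertified f j → ∀ x, f (e' j) x = j := by
  choose cert hcert using fun j : {j // IsCertified f j} => j.2
  have hinj : Injective cert := fun a b hab => Subtype.ext <| by
    rw [← hcert a fun _ => a, hab, hcert b]
  obtain ⟨σ, hσ⟩ := Equiv.Perm.exists_extending_pair (fun j : {j // IsCertified f j} => e j) cert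
    (e.injective.comp Subtype.val_injective) hinj
  refine ⟨e.trans σ.toEmbedding, fun j hj x => ?_⟩
  exact (congrFun (congrArg f (hσ ⟨j, hj⟩)) x).trans (hcert ⟨j, hj⟩ x)

namespace IsSurjPolymorphism

theorem comp_embedding {β : Type*} {f : ι → (κ → α) → α} (hf : IsSurjPolymorphism f) (e : β ↪ ι)
    (he : ∀ j, IsCertified f j → IsCertified (f ∘ e) j) : IsSurjPolymorphism (f ∘ e) := by
  intro xs hxs j
  by_cases hj : IsCertified f j
  · obtain ⟨b, hb⟩ := he j hj
    exact ⟨b, hb _⟩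
  · simp only [IsCertified, not_exists, not_forall] at hj
    choose avoid h_avoid using hj
    let rows : ι → κ → α := extend e (fun b k => xs k b) avoid
    have hrows (b : β) : rows (e b) = fun k => xs k b := e.injective.extend_apply _ _ b
    obtain ⟨i, hi⟩ := hf (fun k i => rows i k) (fun k c => by
      obtain ⟨b, hb⟩ := hxs k c
      exact ⟨e b, (congrFun (hrows b) k).trans hb⟩) j
    by_cases hrange : ∃ b, e b = i
    · obtain ⟨b, rfl⟩ := hrange
      exact ⟨b, by simpa only [hrows, comp_apply] using hi⟩
    · have hrow : rows i = avoid i := extend_apply' _ _ i hrange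
      exact absurd (by simpa only [hrow] using hi) (h_avoid i)

section Square

variable [Finite α] {g : α → (κ → α) → α} (hg : IsSurjPolymorphism g)
include hg

theorem bijective_apply_perm (σ : κ → Equiv.Perm α) :
    Bijective fun c => g c fun l => σ l c :=
  Finite.surjective_iff_bijective.1 (hg (fun l => σ l) fun l => (σ l).surjective)

theorem square_apply_ne {c d : α} (hcd : c ≠ d) {y z : κ → α} (hyz : ∀ l, y l ≠ z l) :
    g c y ≠ g d z := by
  choose σ hc hd using fun l => exists_perm_apply_eq_and_apply_eq hcd (hyz l)
  simpa only [hc, hd] using (hg.bijective_apply_perm σ).injective.ne hcd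

theorem square_exchange {c d : α} (hcd : c ≠ d) {x y z : κ → α} (hyz : ∀ l, y l ≠ z l)
    (hx : ∀ l, x l = y l ∨ x l = z l) : g c x = g c y ∨ g c x = g d z := by
  choose σ τ hσc hτc hτd hoff using fun l => exists_perms_eq_off_pair hcd (hyz l) (hx l)
  obtain ⟨b, hb⟩ := (hg.bijective_apply_perm τ).surjective (g c x)
  by_cases hbc : b = c
  · left
    simpa only [hbc, hτc] using hb.symm
  by_cases hbd : b = d
  · right
    simpa only [hbd, hτd] using hb.symm
  have hcollision : g b (fun l => σ l b) = g c fun l => σ l c := by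
    simpa only [hoff _ b hbc hbd, hσc] using hb
  exact absurd ((hg.bijective_apply_perm σ).injective hcollision) hbc

theorem square_apply_eq_of_const [Nontrivial α] {d j : α} (hd : ∀ x, g d x = j) (c : α)
    (x y : κ → α) : g c x = g c y := by
  obtain rfl | hcd := eq_or_ne c d
  · rw [hd, hd]
  have hz (l : κ) : ∃ z, y l ≠ z ∧ (x l = y l ∨ x l = z) := by
    by_cases hxy : x l = y l
    · obtain ⟨z, hz⟩ := exists_ne (y l)
      exact ⟨z, hz.symm, Or.inl hxy⟩
    · exact ⟨x l, Ne.symm hxy, Or.inr rfl⟩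
  choose z hyz hx using hz
  refine (hg.square_exchange hcd hyz hx).resolve_right fun hxz => ?_
  choose w hw using fun l => exists_ne (x l)
  exact hg.square_apply_ne hcd (fun l => (hw l).symm) (hxz.trans ((hd z).trans (hd w).symm))

end Square

theorem isCertified_of_isCertified [Finite α] [Nontrivial α] {f : ι → (κ → α) → α}
    (hf : IsSurjPolymorphism f) (e : α ↪ ι) {j₀ : α} (hj₀ : IsCertified f j₀) (j : α) :
    IsCertified f j := by
  obtain ⟨e', he'⟩ := exists_embedding_forall_isCertified_apply_eq f e
  have hg : IsSurjPolymorphism (f ∘ e') := hf.comp_embedding e' fun j hj => ⟨j, he' j hj⟩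
  obtain ⟨c, hc⟩ := hg.bijective_apply_perm (fun _ => 1) |>.surjective j
  exact ⟨e' c, fun x => (hg.square_apply_eq_of_const (he' j₀ hj₀) c x _).trans hc⟩

section Uncertified

variable {f : ι → (κ → α) → α} (hf : IsSurjPolymorphism f) (hcert : ∀ j, ¬ IsCertified f j)
include hf hcert

theorem comp_embedding_of_forall_not_isCertified {β : Type*} (e : β ↪ ι) :
    IsSurjPolymorphism (f ∘ e) :=
  hf.comp_embedding e fun j hj => absurd hj (hcert j)

variable [Finite α] [Nontrivial α] (e : α ↪ ι)
include e

theorem apply_ne {i i' : ι} (hi : i ≠ i') {y z : κ → α} (hyz : ∀ l, y l ≠ z l) :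
    f i y ≠ f i' z := by
  obtain ⟨c, d, hcd⟩ := exists_pair_ne α
  obtain ⟨e', rfl, rfl⟩ := exists_embedding_apply_eq_and_apply_eq e hcd hi
  exact (hf.comp_embedding_of_forall_not_isCertified hcert e').square_apply_ne hcd hyz

theorem exchange {i i' : ι} (hi : i ≠ i') {x y z : κ → α} (hyz : ∀ l, y l ≠ z l)
    (hx : ∀ l, x l = y l ∨ x l = z l) : f i x = f i y ∨ f i x = f i' z := by
  obtain ⟨c, d, hcd⟩ := exists_pair_ne α
  obtain ⟨e', rfl, rfl⟩ := exists_embedding_apply_eq_and_apply_eq e hcd hi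
  exact (hf.comp_embedding_of_forall_not_isCertified hcert e').square_exchange hcd hyz hx

variable (hι : 3 ≤ ENat.card ι)
include hι

theorem apply_eq_of_three_le_card (hα : 3 ≤ ENat.card α) {i : ι} {x y : κ → α}
    (hxy : f i x ≠ f i y) (i' : ι) {w : κ → α} (hw : ∀ l, x l = y l ∨ w l = x l) :
    f i' w = f i x := by
  classical
  obtain ⟨t, hti, hti'⟩ := ENat.exists_ne_ne_of_three_le hι i i'
  choose v hvx hvw using fun l => ENat.exists_ne_ne_of_three_le hα (x l) (w l)
  -- `exchange` alone needs `i ≠ i'` and `w l ≠ x l` wherever `x l = y l`; the detour via `f t z`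
  -- removes both restrictions.
  let z : κ → α := fun l => if x l = y l then v l else x l
  let z' : κ → α := fun l => if x l = y l then v l else y l
  have hz : f i x = f t z :=
    (hf.exchange hcert e hti.symm (by grind) (by grind)).resolve_left hxy
  have hz' : f i y = f t z' :=
    (hf.exchange hcert e hti.symm (by grind) (by grind)).resolve_left hxy.symm
  have hzw : f t z = f i' w :=
    (hf.exchange hcert e hti' (y := z') (by grind) (by grind)).resolve_left (by rwa [← hz, ← hz'])
  exact (hz.trans hzw).symm

theorem apply_eq_of_card_lt_three (hα : ENat.card α < 3) {i : ι} {x y : κ → α}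
    (hxy : f i x ≠ f i y) (i' : ι) {w : κ → α} (hw : ∀ l, x l = y l ∨ w l = x l) :
    f i' w = f i x := by
  obtain ⟨s, hsi, hsi'⟩ := ENat.exists_ne_ne_of_three_le hι i i'
  obtain ⟨t, hti, hts⟩ := ENat.exists_ne_ne_of_three_le hι i s
  choose y' hy' using fun l => exists_ne (y l)
  choose w' hw' using fun l => exists_ne (w l)
  let rows : Fin 3 ↪ ι := ⟨![i, t, s], injective_vecCons_triple hti.symm hsi.symm hts⟩
  have hcover (l : κ) : Surjective fun r => ![x, y', w'] r l := by
    intro a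
    by_cases ha : a = x l
    · exact ⟨0, ha.symm⟩
    obtain hxyl | hwl := hw l
    · exact ⟨1, eq_of_ne_of_ne_of_card_lt_three hα (hy' l) (hxyl ▸ ha)⟩
    · exact ⟨2, eq_of_ne_of_ne_of_card_lt_three hα (hw' l) (hwl ▸ ha)⟩
  have hs : f s w' = f i y := by
    obtain ⟨r, hr⟩ := hf.comp_embedding_of_forall_not_isCertified hcert rows _ hcover (f i y)
    fin_cases r
    · exact absurd hr hxy
    · exact absurd hr (hf.apply_ne hcert e hti hy')
    · exact hr
  exact eq_of_ne_of_ne_of_card_lt_three hα (hs ▸ hf.apply_ne hcert e hsi' hw').symm hxy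

theorem apply_eq_of_eq_where_ne {i : ι} {x y : κ → α} (hxy : f i x ≠ f i y) (i' : ι)
    {w : κ → α} (hw : ∀ l, x l = y l ∨ w l = x l) : f i' w = f i x :=
  (le_or_gt 3 (ENat.card α)).elim
    (fun hα => hf.apply_eq_of_three_le_card hcert e hι hα hxy i' hw)
    (fun hα => hf.apply_eq_of_card_lt_three hcert e hι hα hxy i' hw)

theorem exists_apply_eq_apply_const [Finite κ] (i : ι) :
    ∃ k, ∀ i' x, f i' x = f i fun _ => x k := by
  classical
  obtain ⟨a⟩ : Nonempty α := inferInstance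
  obtain ⟨y, hy⟩ : ∃ y, f i y ≠ f i fun _ => a := by
    simpa only [IsCertified, not_exists, not_forall] using (not_exists.1 (hcert _)) i
  obtain ⟨k, u, v, hoff, huv⟩ := exists_forall_ne_eq_and_apply_ne hy
  have hu (i' : ι) (x : κ → α) (hx : x k = u k) : f i' x = f i u :=
    hf.apply_eq_of_eq_where_ne hcert e hι huv i' (by grind)
  refine ⟨k, fun i' x => ?_⟩
  by_cases hxk : x k = u k
  · exact (hu i' x hxk).trans (hu i (fun _ => x k) hxk).symm
  obtain ⟨t, hti, -⟩ := ENat.exists_ne_ne_of_three_le hι i i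
  have hpivot : f i (fun _ => x k) ≠ f i (update (fun _ => x k) k (u k)) := by
    rw [hu i _ (update_self ..), ← hu t (fun _ => u k) rfl]
    exact hf.apply_ne hcert e hti.symm fun _ => hxk
  exact hf.apply_eq_of_eq_where_ne hcert e hι hpivot i' (by grind)

theorem exists_apply_eq_perm [Finite κ] :
    ∃ k : κ, ∃ π : Equiv.Perm α, ∀ i x, f i x = π (x k) := by
  obtain ⟨a⟩ : Nonempty α := inferInstance
  obtain ⟨k, hk⟩ := hf.exists_apply_eq_apply_const hcert e hι (e a)
  obtain ⟨t, ht, -⟩ := ENat.exists_ne_ne_of_three_le hι (e a) (e a)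
  have hinj : Injective fun c => f (e a) fun _ => c := by
    intro c d hcd
    by_contra hne
    exact hf.apply_ne hcert e ht.symm (fun _ => hne) (hcd.trans (hk t fun _ => d).symm)
  exact ⟨k, Equiv.ofBijective _ (Finite.injective_iff_bijective.1 hinj), hk⟩

end Uncertified

end IsSurjPolymorphism

theorem stmt1_general [Finite κ] [Finite α] (e : α ↪ ι) (hι : 3 ≤ ENat.card ι)
    {f : ι → (κ → α) → α} (hf : IsSurjPolymorphism f) :
    (∃ k : κ, ∃ π : Equiv.Perm α, ∀ i x, f i x = π (x k)) ∨ ∀ j, IsCertified f j := by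
  cases subsingleton_or_nontrivial α
  · exact Or.inr fun j => ⟨e j, fun _ => Subsingleton.elim _ _⟩
  by_cases hcert : ∃ j, IsCertified f j
  · obtain ⟨j₀, hj₀⟩ := hcert
    exact Or.inr fun j => hf.isCertified_of_isCertified e hj₀ j
  · exact Or.inl (hf.exists_apply_eq_perm (not_exists.1 hcert) e hι)

/-- every polymorphism of `Surj_{m,n}` (for `m ≥ n ≥ 2`, `(m,n) ≠ (2,2)`) is
either a dictatorship composed with a permutation, or a certificate. -/
theorem stmt1 (m n p : ℕ) (hnm : n ≤ m) (hn : 2 ≤ n) (hne : ¬(m = 2 ∧ n = 2))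
    (f : Fin m → (Fin p → Fin n) → Fin n)
    (hpoly : ∀ xs : Fin p → Fin m → Fin n,
      (∀ k, Function.Surjective (xs k)) →
      Function.Surjective (fun i => f i (fun k => xs k i))) :
    (∃ k : Fin p, ∃ π : Equiv.Perm (Fin n),
      ∀ i : Fin m, ∀ x : Fin p → Fin n, f i x = π (x k)) ∨
    (∀ j : Fin n, ∃ i : Fin m, ∀ x : Fin p → Fin n, f i x = j) := by
  have hm : 3 ≤ m := by omega
  exact stmt1_general (Fin.castLEEmb hnm) (by simpa using hm) hpoly
end

section
/- Let n ≥ 3 and let f_1,…,f_n : [n] → [n] be functions such that for every permutation (x_1,…,x_n) of [n], the vector (f_1(x_1),…,f_n(x_n)) is again a permutation of [n]. Then either there exists a permutation π of [n] such that f_i = π for all i ∈ [n], or every f_i is constant and the map sending i to the constant value of f_i is a permutation of [n]. -/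
/-!
A permutation `x` with `x i = a` and `x j = b`, and its composition with the transposition of `i`
and `j`, agree off `{i, j}`. Their images under `f` are both bijections, so
`{f i a, f j b} = {f i b, f j a}`: either `f i a = f i b` or `f i a = f j a`. If no two coordinate
functions ever agree, the first alternative always holds and every `f i` is constant. If two of
them agree at a single point, the second alternative spreads the agreement to all points and then to
all coordinates.
-/

open Function

theorem exists_perm_apply_eq_and_apply_eq_s3 {α : Type*} {i j a b : α} (hij : i ≠ j) (hab : a ≠ b) :
    ∃ x : Equiv.Perm α, x i = a ∧ x j = b :=
  MulAction.is_two_pretransitive_iff.1 (Equiv.Perm.isMultiplyPretransitive α 2) hij hab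

/-- The family `f`, applied coordinatewise, sends permutations of `α` (seen as vectors indexed by
`α`) to bijections `α → β`. For `α = β = [n]` this is the hypothesis on `f_1, …, f_n`. -/
def PreservesBijectivity {α β : Type*} (f : α → α → β) : Prop :=
  ∀ x : Equiv.Perm α, Bijective fun i => f i (x i)

namespace PreservesBijectivity

variable {α β : Type*} {f : α → α → β} {i j a b : α}

theorem apply_ne_apply (hf : PreservesBijectivity f) (hij : i ≠ j) (hab : a ≠ b) :
    f i a ≠ f j b := by
  obtain ⟨x, rfl, rfl⟩ := exists_perm_apply_eq_and_apply_eq_s3 hij hab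
  exact (hf x).injective.ne hij

theorem apply_eq_or_apply_eq (hf : PreservesBijectivity f) (hij : i ≠ j) (hab : a ≠ b) :
    f i a = f i b ∨ f i a = f j a := by
  classical
  obtain ⟨x, rfl, rfl⟩ := exists_perm_apply_eq_and_apply_eq_s3 hij hab
  obtain ⟨k, hk⟩ : ∃ k, f k (x (Equiv.swap i j k)) = f i (x i) :=
    (hf (x * Equiv.swap i j)).surjective (f i (x i))
  obtain rfl | hki := eq_or_ne k i
  · left
    rw [← hk, Equiv.swap_apply_left]
  obtain rfl | hkj := eq_or_ne k j
  · right
    rw [← hk, Equiv.swap_apply_right]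
  · rw [Equiv.swap_apply_of_ne_of_ne hki hkj] at hk
    exact absurd ((hf x).injective hk) hki

theorem eq_of_apply_eq (hf : PreservesBijectivity f) (hij : i ≠ j) (h : f i a = f j a) :
    f i = f j := by
  funext b
  obtain rfl | hba := eq_or_ne b a
  · exact h
  · refine (hf.apply_eq_or_apply_eq hij hba).resolve_left fun hconst => ?_
    exact hf.apply_ne_apply hij hba (hconst.trans h)

theorem eq_of_ne_of_eq (hf : PreservesBijectivity f) (hij : i ≠ j) (h : f i = f j) (k : α) :
    f k = f i := by
  obtain rfl | hki := eq_or_ne k i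
  · rfl
  funext c
  have : Nontrivial α := ⟨i, j, hij⟩
  obtain ⟨d, hdc⟩ := exists_ne c
  refine ((hf.apply_eq_or_apply_eq hki.symm hdc.symm).resolve_left fun hconst => ?_).symm
  exact hf.apply_ne_apply hij hdc.symm (hconst.trans (congrFun h d))

theorem apply_eq_apply_of_injective (hf : PreservesBijectivity f)
    (hinj : ∀ a, Injective fun i => f i a) (i a b : α) : f i a = f i b := by
  obtain rfl | hab := eq_or_ne a b
  · rfl
  have : Nontrivial α := ⟨a, b, hab⟩
  obtain ⟨j, hji⟩ := exists_ne i
  exact (hf.apply_eq_or_apply_eq hji.symm hab).resolve_right ((hinj a).ne hji.symm)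

end PreservesBijectivity

theorem stmt3_general {α β : Type*} {f : α → α → β} (hf : PreservesBijectivity f) :
    (∃ π : α ≃ β, ∀ i, f i = π) ∨ (∃ π : α ≃ β, ∀ i s, f i s = π i) := by
  let diagonal : α ≃ β := Equiv.ofBijective (fun i => f i i) (hf 1)
  by_cases hinj : ∀ a, Injective fun i => f i a
  · exact .inr ⟨diagonal, fun i s => hf.apply_eq_apply_of_injective hinj i s i⟩
  · obtain ⟨a, ha⟩ := not_forall.1 hinj
    obtain ⟨i, j, hagree, hij⟩ := not_injective_iff.1 ha
    have hall : ∀ k, f k = f i := hf.eq_of_ne_of_eq hij (hf.eq_of_apply_eq hij hagree)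
    exact .inl ⟨diagonal, fun k => funext fun s => congrFun ((hall k).trans (hall s).symm) s⟩

/-- if `f_1,…,f_n : [n] → [n]` map every permutation (applied coordinatewise)
to a permutation, then either all `f_i` equal a common permutation, or each `f_i` is
constant and the constants form a permutation of `[n]`. -/
theorem stmt3 (n : ℕ) (hn : 3 ≤ n)
    (f : Fin n → Fin n → Fin n)
    (hpoly : ∀ x : Fin n → Fin n, Function.Bijective x →
      Function.Bijective (fun i => f i (x i))) :
    (∃ π : Equiv.Perm (Fin n), ∀ i : Fin n, f i = ⇑π) ∨
    (∃ π : Equiv.Perm (Fin n), ∀ i : Fin n, ∀ s : Fin n, f i s = π i) :=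
  stmt3_general fun x => hpoly x x.bijective
end

section
/- In the standing context (m > n ≥ 3, an arity-1 polymorphism f_1,…,f_m : [n] → [n] of Surj_{m,n}, the sets I, C, the number c = |C| with c ≤ n − 1, and the sets I(X,r)): for each r ∈ [n] ∖ C there exists a subset X_r ⊆ [n] with c + 1 ≤ |X_r| ≤ n − 1 such that the set I(X_r, r) satisfies I(X_r, r) ∩ I = ∅ and |I(X_r, r)| ≥ m − |X_r| + 1. -/
/-- The set `I(X,r)` of indices `i` such that `f i` maps all of `X` to `r`. -/
def Iset {m n : ℕ} (f : Fin m → Fin n → Fin n) (X : Finset (Fin n)) (r : Fin n) :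
    Finset (Fin m) :=
  Finset.univ.filter (fun i => ∀ s ∈ X, f i s = r)

/-- The set `I` of indices `i` such that `f i` is constant. -/
def constIdx {m n : ℕ} (f : Fin m → Fin n → Fin n) : Finset (Fin m) :=
  Finset.univ.filter (fun i => ∃ c, ∀ s, f i s = c)

/-- The set `C` of values `j` such that some `f i` is the constant `j` function. -/
def constVals {m n : ℕ} (f : Fin m → Fin n → Fin n) : Finset (Fin n) :=
  Finset.univ.filter (fun j => ∃ i, ∀ s, f i s = j)

/-!
Fix `r ∉ C`. If distinct indices `g a` could be chosen with `f (g a) a ≠ r` for every `a ∈ [n]`,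
put `a` in coordinate `g a`; since no `f i` is the constant `r`, the remaining coordinates can be
filled so that they avoid the value `r` too. The resulting surjective vector is mapped to one that
misses `r`, a contradiction. So Hall's condition fails for the sets `{i | f i a ≠ r}`, and a set `X`
violating it is the desired `X_r`, because the union of these sets over `a ∈ X` is the complement
of `I(X, r)`.
-/

open Finset Function

section

variable {ι α β : Type*} {f : ι → α → β} {r : β}

theorem exists_surjective_forall_apply_ne (hr : ∀ i, ∃ a, f i a ≠ r) {g : α → ι}
    (hg : Injective g) (hgr : ∀ a, f (g a) a ≠ r) :
    ∃ x : ι → α, Surjective x ∧ ∀ i, f i (x i) ≠ r := by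
  choose d hd using hr
  have extend_apply (a : α) : extend g id d (g a) = a := hg.extend_apply id d a
  refine ⟨extend g id d, fun a ↦ ⟨g a, extend_apply a⟩, fun i ↦ ?_⟩
  by_cases hi : ∃ a, g a = i
  · obtain ⟨a, rfl⟩ := hi
    simpa only [extend_apply] using hgr a
  · simpa only [extend_apply' id d i hi] using hd i

variable [Fintype ι] [DecidableEq β]

/-- The set `I(X, r)` for a family of maps between arbitrary types; `Iset` is the case of maps
`[n] → [n]` indexed by `[m]`. -/
def constOnIdx (f : ι → α → β) (X : Finset α) (r : β) : Finset ι :=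
  {i | ∀ a ∈ X, f i a = r}

theorem mem_constOnIdx {X : Finset α} {i : ι} : i ∈ constOnIdx f X r ↔ ∀ a ∈ X, f i a = r := by
  simp only [constOnIdx, mem_filter_univ]

theorem constOnIdx_univ_eq_empty [Fintype α] (hr : ∀ i, ∃ a, f i a ≠ r) :
    constOnIdx f univ r = ∅ := by
  refine eq_empty_of_forall_notMem fun i hi ↦ ?_
  obtain ⟨a, ha⟩ := hr i
  exact ha (mem_constOnIdx.mp hi a (mem_univ a))

theorem disjoint_constOnIdx_filter_const [DecidablePred fun i ↦ ∃ b, ∀ a, f i a = b]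
    (hr : ∀ i, ∃ a, f i a ≠ r) {X : Finset α} (hX : X.Nonempty) :
    Disjoint (constOnIdx f X r) ({i | ∃ b, ∀ a, f i a = b} : Finset ι) := by
  refine disjoint_left.mpr fun i hi hconst ↦ ?_
  obtain ⟨b, hb⟩ := (mem_filter_univ i).mp hconst
  obtain ⟨a, ha⟩ := hX
  obtain ⟨a', ha'⟩ := hr i
  apply ha'
  calc f i a' = b := hb a'
    _ = f i a := (hb a).symm
    _ = r := mem_constOnIdx.mp hi a ha

theorem exists_injective_forall_apply_ne
    (h : ∀ X : Finset α, #X + #(constOnIdx f X r) ≤ Fintype.card ι) :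
    ∃ g : α → ι, Injective g ∧ ∀ a, f (g a) a ≠ r := by
  classical
  let t (a : α) : Finset ι := {i | f i a ≠ r}
  have biUnion_eq (X : Finset α) : X.biUnion t = (constOnIdx f X r)ᶜ := by
    ext i
    simp [t, mem_constOnIdx]
  have hall (X : Finset α) : #X ≤ #(X.biUnion t) := by
    rw [biUnion_eq, card_compl]
    exact Nat.le_sub_of_add_le (h X)
  obtain ⟨g, hg, hgt⟩ := (all_card_le_biUnion_card_iff_exists_injective t).mp hall
  exact ⟨g, hg, fun a ↦ (mem_filter_univ (g a)).mp (hgt a)⟩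

theorem exists_card_lt_card_add_card_constOnIdx (hr : ∀ i, ∃ a, f i a ≠ r)
    (hf : ∀ x : ι → α, Surjective x → ∃ i, f i (x i) = r) :
    ∃ X : Finset α, Fintype.card ι < #X + #(constOnIdx f X r) := by
  by_contra! hall
  obtain ⟨g, hg, hgr⟩ := exists_injective_forall_apply_ne hall
  obtain ⟨x, hx, hxr⟩ := exists_surjective_forall_apply_ne hr hg hgr
  obtain ⟨i, hi⟩ := hf x hx
  exact hxr i hi

theorem stmt4_general [Fintype α] [DecidablePred fun i ↦ ∃ b, ∀ a, f i a = b]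
    (hcard : Fintype.card α ≤ Fintype.card ι) (hr : ∀ i, ∃ a, f i a ≠ r)
    (hf : ∀ x : ι → α, Surjective x → ∃ i, f i (x i) = r) :
    ∃ X : Finset α, #{i | ∃ b, ∀ a, f i a = b} < #X ∧ #X < Fintype.card α ∧
      Disjoint (constOnIdx f X r) ({i | ∃ b, ∀ a, f i a = b} : Finset ι) ∧
      Fintype.card ι < #X + #(constOnIdx f X r) := by
  classical
  obtain ⟨X, hX⟩ := exists_card_lt_card_add_card_constOnIdx hr hf
  have X_nonempty : X.Nonempty := by
    have := card_le_univ (constOnIdx f X r)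
    exact card_pos.mp (by lia)
  have X_ne_univ : X ≠ univ := by
    rintro rfl
    rw [constOnIdx_univ_eq_empty hr, card_empty, card_univ] at hX
    lia
  have disj := disjoint_constOnIdx_filter_const hr X_nonempty
  have card_add_card_le := (card_union_of_disjoint disj).symm.trans_le (card_le_univ _)
  exact ⟨X, by lia, (card_lt_iff_ne_univ X).mpr X_ne_univ, disj, hX⟩

end

section

variable {m n : ℕ} {f : Fin m → Fin n → Fin n}

theorem iset_eq_constOnIdx (X : Finset (Fin n)) (r : Fin n) : Iset f X r = constOnIdx f X r := by
  ext i
  simp only [Iset, mem_filter_univ, mem_constOnIdx]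

theorem card_constVals_le_card_constIdx : #(constVals f) ≤ #(constIdx f) := by
  refine card_le_card_of_forall_subsingleton (fun j i ↦ ∀ s, f i s = j) (fun j hj ↦ ?_) ?_
  · obtain ⟨i, hi⟩ := (mem_filter_univ j).mp hj
    exact ⟨i, (mem_filter_univ i).mpr ⟨j, hi⟩, hi⟩
  · rintro i - j ⟨-, hj⟩ k ⟨-, hk⟩
    exact (hj j).symm.trans (hk j)

theorem exists_apply_ne_of_notMem_constVals {r : Fin n} (hr : r ∉ constVals f) (i : Fin m) :
    ∃ s, f i s ≠ r := by
  by_contra! hi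
  exact hr ((mem_filter_univ r).mpr ⟨i, hi⟩)

end

/-- Hall-type lemma producing the witness sets `X_r`. -/
theorem stmt4 (m n : ℕ) (hn : 3 ≤ n) (hmn : n < m)
    (f : Fin m → Fin n → Fin n)
    (hpoly : ∀ x : Fin m → Fin n, Function.Surjective x →
      Function.Surjective (fun i => f i (x i)))
    (hc : (constVals f).card ≤ n - 1) :
    ∀ r ∉ constVals f, ∃ X : Finset (Fin n),
      (constVals f).card + 1 ≤ X.card ∧ X.card ≤ n - 1 ∧
      Iset f X r ∩ constIdx f = ∅ ∧
      m - X.card + 1 ≤ (Iset f X r).card := by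
  intro r hr
  obtain ⟨X, hI, hXn, hdisj, hm⟩ := stmt4_general (by simpa only [Fintype.card_fin] using hmn.le)
    (exists_apply_ne_of_notMem_constVals hr) fun x hx ↦ hpoly x hx r
  simp only [Fintype.card_fin, ← iset_eq_constOnIdx] at hXn hdisj hm
  exact ⟨X, card_constVals_le_card_constIdx.trans_lt hI, Nat.le_sub_one_of_lt hXn,
    disjoint_iff_inter_eq_empty.mp hdisj, by lia⟩
end

section
/- In the standing context (m > n ≥ 3, an arity-1 polymorphism f_1,…,f_m : [n] → [n] of Surj_{m,n}, the sets I, C, the number c = |C| with c ≤ n − 1, and the sets I(X,r)): for any family of nonempty subsets X_r ⊆ [n] indexed by r ∈ [n] ∖ C, one has ∑_{r ∈ [n] ∖ C} |I(X_r, r)| · |X_r| ≤ (m − c) · n. -/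
/-!
Arrange the values `f i s` in an array with rows `i` and columns `s`. The box `I(X_r, r) × X_r` is
filled with the value `r`, so boxes for different `r` are disjoint. For `r ∉ C` the box meets no
constant row, since such a row would be constantly `r`. There are at least `c` constant rows, one
for each element of `C`, so the boxes share the at most `(m - c) n` cells of the remaining rows.
-/

section

open Finset

variable {ι α β : Type*} (f : ι → α → β)

theorem sum_card_mul_card_le_of_forall_eq [Fintype α] {R : Finset β} {J : Finset ι}
    {I : β → Finset ι} {X : β → Finset α} (hJ : ∀ r ∈ R, I r ⊆ J)
    (hf : ∀ r ∈ R, ∀ i ∈ I r, ∀ s ∈ X r, f i s = r) :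
    ∑ r ∈ R, #(I r) * #(X r) ≤ #J * Fintype.card α := by
  classical
  have hdisj : (R : Set β).PairwiseDisjoint fun r => I r ×ˢ X r := by
    intro r hr r' hr' hne
    refine disjoint_left.mpr fun p hp hp' => hne ?_
    rw [mem_product] at hp hp'
    exact (hf r hr _ hp.1 _ hp.2).symm.trans (hf r' hr' _ hp'.1 _ hp'.2)
  calc ∑ r ∈ R, #(I r) * #(X r) = #(R.biUnion fun r => I r ×ˢ X r) := by
        simp only [card_biUnion hdisj, card_product]
    _ ≤ #(J ×ˢ univ) := card_le_card <| biUnion_subset.mpr fun r hr =>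
        product_subset_product (hJ r hr) (subset_univ _)
    _ = #J * Fintype.card α := by rw [card_product, card_univ]

theorem card_add_card_nonconstant_le [Fintype ι] [Nonempty α]
    [DecidablePred fun i => ∃ c, ∀ s, f i s = c] {C : Finset β}
    (hC : ∀ j ∈ C, ∃ i, ∀ s, f i s = j) :
    #C + #{i | ¬∃ c, ∀ s, f i s = c} ≤ Fintype.card ι := by
  obtain ⟨s₀⟩ := ‹Nonempty α›
  have hsurj : Set.SurjOn (fun i => f i s₀) ({i | ∃ c, ∀ s, f i s = c} : Finset ι) C := by
    intro j hj
    obtain ⟨i, hi⟩ := hC j hj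
    exact ⟨i, mem_coe.mpr ((mem_filter_univ i).mpr ⟨j, hi⟩), hi s₀⟩
  calc #C + #{i | ¬∃ c, ∀ s, f i s = c}
      ≤ #{i | ∃ c, ∀ s, f i s = c} + #{i | ¬∃ c, ∀ s, f i s = c} :=
        Nat.add_le_add_right (card_le_card_of_surjOn _ hsurj) _
    _ = Fintype.card ι := by rw [card_filter_add_card_filter_not, card_univ]

theorem stmt5_general [Fintype ι] [Fintype α] {C R : Finset β}
    (hC : ∀ j ∈ C, ∃ i, ∀ s, f i s = j) (hR : ∀ r ∈ R, ¬∃ i, ∀ s, f i s = r)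
    {I : β → Finset ι} {X : β → Finset α} (hX : ∀ r ∈ R, (X r).Nonempty)
    (hI : ∀ r ∈ R, ∀ i ∈ I r, ∀ s ∈ X r, f i s = r) :
    ∑ r ∈ R, #(I r) * #(X r) ≤ (Fintype.card ι - #C) * Fintype.card α := by
  classical
  obtain _ | _ := isEmpty_or_nonempty α
  · simp [eq_empty_of_isEmpty]
  let J : Finset ι := {i | ¬∃ c, ∀ s, f i s = c}
  have hIJ : ∀ r ∈ R, I r ⊆ J := by
    intro r hr i hi
    rw [mem_filter_univ]
    rintro ⟨c, hc⟩
    obtain ⟨s, hs⟩ := hX r hr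
    obtain rfl : c = r := (hc s).symm.trans (hI r hr i hi s hs)
    exact hR c hr ⟨i, hc⟩
  have hJ : #C + #J ≤ Fintype.card ι := card_add_card_nonconstant_le f hC
  calc ∑ r ∈ R, #(I r) * #(X r) ≤ #J * Fintype.card α :=
        sum_card_mul_card_le_of_forall_eq f hIJ hI
    _ ≤ (Fintype.card ι - #C) * Fintype.card α :=
        Nat.mul_le_mul_right _ (Nat.le_sub_of_add_le' hJ)

end

/-- the upper bound `Δ ≤ (m - c)·n`. -/
theorem stmt5 (m n : ℕ) (hn : 3 ≤ n) (hmn : n < m)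
    (f : Fin m → Fin n → Fin n)
    (hpoly : ∀ x : Fin m → Fin n, Function.Surjective x →
      Function.Surjective (fun i => f i (x i)))
    (hc : (constVals f).card ≤ n - 1)
    (X : Fin n → Finset (Fin n))
    (hX : ∀ r ∉ constVals f, (X r).Nonempty) :
    ∑ r ∈ (constVals f)ᶜ, (Iset f (X r) r).card * (X r).card
      ≤ (m - (constVals f).card) * n := by
  simpa only [Fintype.card_fin] using stmt5_general f (C := constVals f) (R := (constVals f)ᶜ)
    (I := fun r => Iset f (X r) r) (X := X) (by simp [constVals]) (by simp [constVals])
    (by simpa using hX) (by simp [Iset])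
end

section
/- In the standing context (m > n ≥ 3, an arity-1 polymorphism f_1,…,f_m : [n] → [n] of Surj_{m,n}, the sets I, C, the number c = |C| with c ≤ n − 1, and the sets I(X,r)): suppose for each r ∈ [n] ∖ C a subset X_r ⊆ [n] is given with c + 1 ≤ |X_r| ≤ n − 1 and |I(X_r, r)| ≥ m − |X_r| + 1, and let Δ = ∑_{r ∈ [n] ∖ C} |I(X_r, r)| · |X_r|. Then Δ ≥ (n − c) · min((c+1)(m−c), (n−1)(m−n+2)) and Δ ≥ (n − c) · m. Furthermore, if Δ = (n − c) · m then c = 0 and, for every r ∈ [n], |X_r| = 1 and I(X_r, r) = [m]. -/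
/-!
The two factors `k` and `m - k + 1` have the constant sum `m + 1`, and among pairs with a given sum
the product grows as the pair gets more balanced. Hence `k * (m - k + 1)` is least at an endpoint
of the range allowed for `k = |X_r|`: the endpoints `c + 1` and `n - 1` give the first bound, the
endpoints `1` and `m` the second one, which is strict in between. Sum over the `n - c` values of
`r` outside `C`. Equality in the second bound forces `|X_r| = 1` for each of them, and since there
is at least one, `c + 1 ≤ |X_r|` gives `c = 0`.
-/

section BalancedProducts

variable {R : Type*} [CommSemiring R] {a a' b b' k k' : R}

section PartialOrder

variable [PartialOrder R] [IsStrictOrderedRing R] [ExistsAddOfLE R]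

theorem mul_le_mul_of_add_eq_add (h : a + a' = k + k') (hk : a ≤ k) (hk' : a ≤ k') :
    a * a' ≤ k * k' := by
  refine le_of_add_le_add_left (a := a * a) ?_
  calc a * a + a * a' = a * k' + k * a := by rw [← mul_add, h]; ring
    _ ≤ a * a + k * k' := mul_add_mul_le_mul_add_mul hk hk'

theorem mul_lt_mul_of_add_eq_add (h : a + a' = k + k') (hk : a < k) (hk' : a < k') :
    a * a' < k * k' := by
  refine lt_of_add_lt_add_left (a := a * a) ?_
  calc a * a + a * a' = a * k' + k * a := by rw [← mul_add, h]; ring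
    _ < a * a + k * k' := mul_add_mul_lt_mul_add_mul hk hk'

end PartialOrder

theorem min_mul_le_mul_of_add_eq_add [LinearOrder R] [IsStrictOrderedRing R] [ExistsAddOfLE R]
    (ha : a + a' = k + k') (hb : b + b' = k + k') (hak : a ≤ k) (hkb : k ≤ b) :
    min (a * a') (b * b') ≤ k * k' := by
  rcases le_total a k' with hak' | hk'a
  · exact min_le_of_left_le (mul_le_mul_of_add_eq_add ha hak hak')
  · have hk'b : k' ≤ b := hk'a.trans (hak.trans hkb)
    have hb'k : b' ≤ k := le_of_add_le_add_left (a := k') <| by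
      calc k' + b' ≤ b + b' := by gcongr
        _ = k' + k := by rw [hb, add_comm]
    have hb'k' : b' ≤ k' := le_of_add_le_add_left (a := k) <| by
      calc k + b' ≤ b + b' := by gcongr
        _ = k + k' := hb
    refine min_le_of_right_le ?_
    rw [mul_comm b]
    exact mul_le_mul_of_add_eq_add ((add_comm b' b).trans hb) hb'k hb'k'

end BalancedProducts

section CardinalityBounds

variable {c k m n t : ℕ}

theorem min_mul_le_mul_of_sub_add_one_le (hnm : n ≤ m) (hck : c + 1 ≤ k) (hkn : k ≤ n - 1)
    (ht : m - k + 1 ≤ t) :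
    min ((c + 1) * (m - c)) ((n - 1) * (m - n + 2)) ≤ t * k :=
  calc min ((c + 1) * (m - c)) ((n - 1) * (m - n + 2))
      ≤ k * (m - k + 1) :=
        min_mul_le_mul_of_add_eq_add (by omega) (by omega) hck hkn
    _ ≤ k * t := by gcongr
    _ = t * k := mul_comm k t

theorem le_mul_of_sub_add_one_le (hk : 1 ≤ k) (hkm : k ≤ m) (ht : m - k + 1 ≤ t) :
    m ≤ t * k :=
  calc m = 1 * m := (one_mul m).symm
    _ ≤ k * (m - k + 1) := mul_le_mul_of_add_eq_add (by omega) hk (by omega)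
    _ ≤ k * t := by gcongr
    _ = t * k := mul_comm k t

theorem lt_mul_of_sub_add_one_le (hk : 1 < k) (hkm : k < m) (ht : m - k + 1 ≤ t) :
    m < t * k :=
  calc m = 1 * m := (one_mul m).symm
    _ < k * (m - k + 1) := mul_lt_mul_of_add_eq_add (by omega) hk (by omega)
    _ ≤ k * t := by gcongr
    _ = t * k := mul_comm k t

end CardinalityBounds

theorem eq_of_sum_eq_card_nsmul_of_le {ι M : Type*} [AddCommMonoid M] [PartialOrder M]
    [IsOrderedCancelAddMonoid M] {s : Finset ι} {g : ι → M} {a : M}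
    (hle : ∀ i ∈ s, a ≤ g i) (hsum : ∑ i ∈ s, g i = s.card • a) : ∀ i ∈ s, g i = a := by
  rw [← Finset.sum_const] at hsum
  exact fun i hi => ((Finset.sum_eq_sum_iff_of_le hle).mp hsum.symm i hi).symm

theorem stmt6_general {α β : Type*} [Fintype α] [Fintype β] [DecidableEq β]
    (hcard : Fintype.card β ≤ Fintype.card α) (C : Finset β) (hC : C.card < Fintype.card β)
    (X : β → Finset β) (I : β → Finset α)
    (hX : ∀ r ∉ C,
      C.card + 1 ≤ (X r).card ∧ (X r).card ≤ Fintype.card β - 1 ∧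
      Fintype.card α - (X r).card + 1 ≤ (I r).card) :
    (Fintype.card β - C.card) *
        min ((C.card + 1) * (Fintype.card α - C.card))
          ((Fintype.card β - 1) * (Fintype.card α - Fintype.card β + 2))
      ≤ ∑ r ∈ Cᶜ, (I r).card * (X r).card ∧
    (Fintype.card β - C.card) * Fintype.card α ≤ ∑ r ∈ Cᶜ, (I r).card * (X r).card ∧
    (∑ r ∈ Cᶜ, (I r).card * (X r).card = (Fintype.card β - C.card) * Fintype.card α →
      C.card = 0 ∧ ∀ r, (X r).card = 1 ∧ I r = Finset.univ) := by
  simp only [← Finset.mem_compl] at hX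
  simp only [← Finset.card_compl, ← smul_eq_mul (Finset.card Cᶜ)]
  have hle : ∀ r ∈ Cᶜ, Fintype.card α ≤ (I r).card * (X r).card := fun r hr =>
    have ⟨hlow, hup, hI⟩ := hX r hr
    le_mul_of_sub_add_one_le (by omega) (by omega) hI
  refine ⟨Finset.card_nsmul_le_sum _ _ _ fun r hr => ?_,
    Finset.card_nsmul_le_sum _ _ _ hle, fun hsum => ?_⟩
  · obtain ⟨hlow, hup, hI⟩ := hX r hr
    exact min_mul_le_mul_of_sub_add_one_le hcard hlow hup hI
  have heq := eq_of_sum_eq_card_nsmul_of_le hle hsum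
  have hX1 : ∀ r ∈ Cᶜ, (X r).card = 1 := fun r hr => by
    obtain ⟨hlow, hup, hI⟩ := hX r hr
    by_contra hne
    exact (lt_mul_of_sub_add_one_le (by omega) (by omega) hI).ne' (heq r hr)
  obtain ⟨r₀, hr₀⟩ : Cᶜ.Nonempty := by
    rwa [← Finset.card_pos, Finset.card_compl, tsub_pos_iff_lt]
  have hC0 : C.card = 0 := by
    have hlow := (hX r₀ hr₀).1
    rw [hX1 r₀ hr₀] at hlow
    omega
  refine ⟨hC0, fun r => ?_⟩
  have hr : r ∈ Cᶜ := by simp [Finset.card_eq_zero.mp hC0]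
  refine ⟨hX1 r hr, (I r).card_eq_iff_eq_univ.mp ?_⟩
  simpa only [hX1 r hr, mul_one] using heq r hr

/-- the lower bounds on `Δ` and the tightness analysis. -/
theorem stmt6 (m n : ℕ) (hn : 3 ≤ n) (hmn : n < m)
    (f : Fin m → Fin n → Fin n)
    (hpoly : ∀ x : Fin m → Fin n, Function.Surjective x →
      Function.Surjective (fun i => f i (x i)))
    (hc : (constVals f).card ≤ n - 1)
    (X : Fin n → Finset (Fin n))
    (hX : ∀ r ∉ constVals f,
      (constVals f).card + 1 ≤ (X r).card ∧ (X r).card ≤ n - 1 ∧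
      m - (X r).card + 1 ≤ (Iset f (X r) r).card) :
    (n - (constVals f).card) *
        min (((constVals f).card + 1) * (m - (constVals f).card))
          ((n - 1) * (m - n + 2))
      ≤ ∑ r ∈ (constVals f)ᶜ, (Iset f (X r) r).card * (X r).card ∧
    (n - (constVals f).card) * m
      ≤ ∑ r ∈ (constVals f)ᶜ, (Iset f (X r) r).card * (X r).card ∧
    (∑ r ∈ (constVals f)ᶜ, (Iset f (X r) r).card * (X r).card
        = (n - (constVals f).card) * m →
      (constVals f).card = 0 ∧
      ∀ r : Fin n, (X r).card = 1 ∧ Iset f (X r) r = Finset.univ) := by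
  simpa only [Fintype.card_fin] using
    stmt6_general (by simpa using hmn.le) (constVals f) (by rw [Fintype.card_fin]; omega) X
      (fun r => Iset f (X r) r) (by simpa only [Fintype.card_fin] using hX)
end

section
/- Let m > n ≥ 3 and let f_1,…,f_m : [n] → [n] be functions such that (f_1(x_1),…,f_m(x_m)) ∈ Surj_{m,n} for every (x_1,…,x_m) ∈ Surj_{m,n}. If it is not the case that for every j ∈ [n] some f_i is the constant j function, then no f_i is constant (equivalently, with C = {j ∈ [n] : f_i ≡ j for some i}, the assumption |C| ≤ n − 1 implies C = ∅). -/
/-!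
Let `k` be the number of constant functions among `m` functions `f i : α → β`, and `n = |α|`.
If no `f i` is constantly `j`, then a system of distinct indices `g s` with `f (g s) s ≠ j` would
extend to a surjective input whose output misses `j`. So Hall's condition fails: for some `S ⊆ α`,
fewer than `|S|` of the `f i` differ from `j` somewhere on `S`. Every constant function is one of
these, so `k < |S| < n`, and `j` is taken at `|S| * (m + 1 - |S|)` or more of the points `(i, s)`.
On the other hand at least `n - k` such values `j` share the `(m - k) * n` points at which `f i` is
not constant, and for `k ≥ 1` there is not enough room. The product is concave in `|S|`, so this
only has to be compared at the endpoints `|S| = k + 1` and `|S| = n - 1`.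
-/

section Arithmetic

variable {R : Type*} [CommRing R] [LinearOrder R] [IsStrictOrderedRing R]

theorem min_mul_sub_le_mul_sub {a b s : R} (c : R) (has : a ≤ s) (hsb : s ≤ b) :
    min (a * (c - a)) (b * (c - b)) ≤ s * (c - s) := by
  rcases le_total (a + s) c with h | h
  · have : 0 ≤ (s - a) * (c - (a + s)) := mul_nonneg (sub_nonneg.2 has) (sub_nonneg.2 h)
    exact min_le_of_left_le (by linarith)
  · have : 0 ≤ (b - s) * (b + s - c) := mul_nonneg (sub_nonneg.2 hsb) (by linarith)
    exact min_le_of_right_le (by linarith)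

variable {k m n s : R}

theorem sub_mul_lt_sub_mul_succ_mul (hk : 0 < k) (hkn : k + 1 < n) (hkm : k < m) :
    (m - k) * n < (n - k) * ((k + 1) * (m - k)) := by
  have : 0 < (m - k) * (k * (n - k - 1)) :=
    mul_pos (sub_pos.2 hkm) (mul_pos hk (by linarith))
  linarith

theorem sub_mul_lt_sub_mul_pred_mul (hk : 0 < k) (hkn : k + 2 ≤ n) (hnm : n ≤ m) :
    (m - k) * n < (n - k) * ((n - 1) * (m - n + 2)) := by
  have hsub : 2 * (m - k) ≤ (n - k) * (m - n + 2) := by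
    have : 0 ≤ (n - k - 2) * (m - n) := mul_nonneg (by linarith) (by linarith)
    linarith
  have hpos : 0 < (n - k) * (m - n + 2) := mul_pos (by linarith) (by linarith)
  refine lt_of_mul_lt_mul_left ?_ (zero_le_two (α := R))
  calc 2 * ((m - k) * n) = 2 * (m - k) * n := by ring
    _ ≤ (n - k) * (m - n + 2) * n := mul_le_mul_of_nonneg_right hsub (by linarith)
    _ < (n - k) * (m - n + 2) * (2 * (n - 1)) := mul_lt_mul_of_pos_left (by linarith) hpos
    _ = 2 * ((n - k) * ((n - 1) * (m - n + 2))) := by ring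

theorem sub_mul_lt_sub_mul_mul_sub (hk : 0 < k) (hks : k + 1 ≤ s) (hsn : s ≤ n - 1)
    (hnm : n ≤ m) : (m - k) * n < (n - k) * (s * (m + 1 - s)) := by
  have hnk : 0 ≤ n - k := by linarith
  rcases min_le_iff.1 (min_mul_sub_le_mul_sub (m + 1) hks hsn) with h | h
  · calc (m - k) * n < (n - k) * ((k + 1) * (m - k)) :=
          sub_mul_lt_sub_mul_succ_mul hk (by linarith) (by linarith)
      _ = (n - k) * ((k + 1) * (m + 1 - (k + 1))) := by ring
      _ ≤ (n - k) * (s * (m + 1 - s)) := mul_le_mul_of_nonneg_left h hnk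
  · calc (m - k) * n < (n - k) * ((n - 1) * (m - n + 2)) :=
          sub_mul_lt_sub_mul_pred_mul hk (by linarith) hnm
      _ = (n - k) * ((n - 1) * (m + 1 - (n - 1))) := by ring
      _ ≤ (n - k) * (s * (m + 1 - s)) := mul_le_mul_of_nonneg_left h hnk

end Arithmetic

section Polymorphism

open Finset Fintype

variable {ι α β : Type*} {f : ι → α → β} {j : β}

/-- A family `f` maps surjective vectors to surjective vectors. For `α = β` this says that `f` is
an arity-1 polymorphism of the surjectivity predicate, one function per coordinate. -/
def PreservesSurjective (f : ι → α → β) : Prop :=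
  ∀ x : ι → α, Function.Surjective x → Function.Surjective fun i => f i (x i)

open Classical in
/-- The indices of the constant functions in a family. -/
noncomputable def constIndices [Fintype ι] (f : ι → α → β) : Finset ι :=
  {i | ∃ c, ∀ s, f i s = c}

open Classical in
/-- The complement of the set `C` of the values `j` such that some `f i` is constantly `j`. -/
noncomputable def uncertifiedValues [Fintype β] (f : ι → α → β) : Finset β :=
  {j | ¬ ∃ i, ∀ s, f i s = j}

open Classical in
/-- The points of `ι × α` at which a family, read as a function of two variables, equals `j`. -/
noncomputable def levelSet [Fintype ι] [Fintype α] (f : ι → α → β) (j : β) : Finset (ι × α) :=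
  {p | f p.1 p.2 = j}

open Classical in
/-- The indices `i` for which `f i` is not constantly `j` on `S`: the neighbourhood of `S` in the
bipartite graph on `α` and `ι` to which Hall's theorem is applied. -/
noncomputable def avoidingIndices [Fintype ι] (f : ι → α → β) (j : β) (S : Finset α) : Finset ι :=
  {i | ∃ s ∈ S, f i s ≠ j}

theorem mem_constIndices [Fintype ι] {i : ι} : i ∈ constIndices f ↔ ∃ c, ∀ s, f i s = c := by
  simp only [constIndices, mem_filter_univ]

theorem mem_uncertifiedValues [Fintype β] :
    j ∈ uncertifiedValues f ↔ ¬ ∃ i, ∀ s, f i s = j := by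
  simp only [uncertifiedValues, mem_filter_univ]

theorem mem_levelSet [Fintype ι] [Fintype α] {p : ι × α} :
    p ∈ levelSet f j ↔ f p.1 p.2 = j := by
  simp only [levelSet, mem_filter_univ]

theorem mem_avoidingIndices [Fintype ι] {S : Finset α} {i : ι} :
    i ∈ avoidingIndices f j S ↔ ∃ s ∈ S, f i s ≠ j := by
  simp only [avoidingIndices, mem_filter_univ]

theorem PreservesSurjective.not_exists_injective (hf : PreservesSurjective f)
    (hj : ¬ ∃ i, ∀ s, f i s = j) :
    ¬ ∃ g : α → ι, Function.Injective g ∧ ∀ s, f (g s) s ≠ j := by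
  rintro ⟨g, hg, hgj⟩
  push Not at hj
  choose b hb using hj
  have hx : Function.Surjective (Function.extend g id b) := fun s => ⟨g s, hg.extend_apply id b s⟩
  obtain ⟨i, hi⟩ := hf _ hx j
  by_cases h : ∃ s, g s = i
  · obtain ⟨s, rfl⟩ := h
    exact hgj s (by simpa only [hg.extend_apply, id] using hi)
  · exact hb i (by simpa only [Function.extend_apply' _ _ _ h] using hi)

theorem PreservesSurjective.exists_card_avoidingIndices_lt [Fintype ι]
    (hf : PreservesSurjective f) (hj : ¬ ∃ i, ∀ s, f i s = j) :
    ∃ S : Finset α, #(avoidingIndices f j S) < #S := by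
  classical
  by_contra! hHall
  have hbiUnion (S : Finset α) : S.biUnion (fun s => {i | f i s ≠ j}) = avoidingIndices f j S := by
    ext i
    simp only [mem_biUnion, mem_filter_univ, mem_avoidingIndices]
  obtain ⟨g, hg, hgj⟩ := (all_card_le_biUnion_card_iff_exists_injective _).1 fun S =>
    (hHall S).trans_eq (congrArg card (hbiUnion S).symm)
  exact hf.not_exists_injective hj ⟨g, hg, fun s => (mem_filter.1 (hgj s)).2⟩

theorem constIndices_subset_avoidingIndices [Fintype ι] (hj : ¬ ∃ i, ∀ s, f i s = j)
    {S : Finset α} (hS : S.Nonempty) : constIndices f ⊆ avoidingIndices f j S := by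
  intro i hi
  obtain ⟨c, hc⟩ := mem_constIndices.1 hi
  obtain ⟨s, hs⟩ := hS
  refine mem_avoidingIndices.2 ⟨s, hs, fun hij => hj ⟨i, fun t => ?_⟩⟩
  rw [hc t, ← hc s, hij]

theorem avoidingIndices_univ [Fintype ι] [Fintype α] (hj : ¬ ∃ i, ∀ s, f i s = j) :
    avoidingIndices f j univ = univ := by
  push Not at hj
  ext i
  simpa only [mem_avoidingIndices, mem_univ, true_and, iff_true] using hj i

theorem card_mul_card_compl_avoidingIndices_le [Fintype ι] [DecidableEq ι] [Fintype α]
    (f : ι → α → β) (j : β) (S : Finset α) :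
    #S * #(avoidingIndices f j S)ᶜ ≤ #(levelSet f j) := by
  rw [mul_comm, ← card_product]
  refine card_le_card fun p hp => mem_levelSet.2 ?_
  obtain ⟨hi, hs⟩ := mem_product.1 hp
  by_contra h
  exact mem_compl.1 hi (mem_avoidingIndices.2 ⟨p.2, hs, h⟩)

theorem PreservesSurjective.exists_mul_le_card_levelSet [Fintype ι] [Fintype α]
    (hf : PreservesSurjective f) (hαι : card α ≤ card ι) (hj : ¬ ∃ i, ∀ s, f i s = j) :
    ∃ s, #(constIndices f) < s ∧ s < card α ∧ s * (card ι + 1 - s) ≤ #(levelSet f j) := by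
  classical
  obtain ⟨S, hS⟩ := hf.exists_card_avoidingIndices_lt hj
  have hconst : #(constIndices f) ≤ #(avoidingIndices f j S) :=
    card_le_card (constIndices_subset_avoidingIndices hj (card_pos.1 (Nat.zero_lt_of_lt hS)))
  have hSuniv : S ≠ univ := by
    rintro rfl
    rw [avoidingIndices_univ hj, card_univ, card_univ] at hS
    exact hS.not_ge hαι
  refine ⟨#S, hconst.trans_lt hS, (card_lt_iff_ne_univ S).2 hSuniv, ?_⟩
  calc #S * (card ι + 1 - #S) ≤ #S * #(avoidingIndices f j S)ᶜ := by
        rw [card_compl]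
        exact Nat.mul_le_mul_left _ (by omega)
    _ ≤ #(levelSet f j) := card_mul_card_compl_avoidingIndices_le f j S

theorem PreservesSurjective.card_compl_constIndices_mul_lt [Fintype ι] [DecidableEq ι]
    [Fintype α] (hf : PreservesSurjective f) (hαι : card α ≤ card ι)
    (hconst : (constIndices f).Nonempty) (hj : ¬ ∃ i, ∀ s, f i s = j) :
    #(constIndices f)ᶜ * card α < (card α - #(constIndices f)) * #(levelSet f j) := by
  obtain ⟨s, hks, hsn, hlevel⟩ := hf.exists_mul_le_card_levelSet hαι hj
  refine lt_of_lt_of_le ?_ (Nat.mul_le_mul_left _ hlevel)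
  have hk : 0 < #(constIndices f) := hconst.card_pos
  rw [card_compl]
  zify [show #(constIndices f) ≤ card ι by omega, show #(constIndices f) ≤ card α by omega,
    show s ≤ card ι + 1 by omega]
  exact sub_mul_lt_sub_mul_mul_sub (by omega) (by omega) (by omega) (by omega)

theorem sum_card_levelSet_uncertifiedValues_le [Fintype ι] [DecidableEq ι] [Fintype α]
    [Fintype β] (f : ι → α → β) :
    ∑ j ∈ uncertifiedValues f, #(levelSet f j) ≤ #(constIndices f)ᶜ * card α := by
  classical
  have hdisj : Set.PairwiseDisjoint (uncertifiedValues f : Set β) (levelSet f) :=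
    fun a _ b _ hab => disjoint_left.2 fun p ha hb =>
      hab ((mem_levelSet.1 ha).symm.trans (mem_levelSet.1 hb))
  rw [← card_biUnion hdisj, ← card_univ, ← card_product]
  refine card_le_card fun p hp => ?_
  obtain ⟨j, hj, hpj⟩ := mem_biUnion.1 hp
  refine mem_product.2 ⟨mem_compl.2 fun hi => ?_, mem_univ _⟩
  obtain ⟨c, hc⟩ := mem_constIndices.1 hi
  refine mem_uncertifiedValues.1 hj ⟨p.1, fun t => ?_⟩
  rw [hc t, ← hc p.2, mem_levelSet.1 hpj]

theorem exists_card_mul_card_levelSet_le [Fintype ι] [DecidableEq ι] [Fintype α] [Fintype β]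
    (h : (uncertifiedValues f).Nonempty) :
    ∃ j ∈ uncertifiedValues f,
      #(uncertifiedValues f) * #(levelSet f j) ≤ #(constIndices f)ᶜ * card α := by
  refine exists_le_of_sum_le h ?_
  rw [← mul_sum, sum_const, smul_eq_mul]
  exact Nat.mul_le_mul_left _ (sum_card_levelSet_uncertifiedValues_le f)

theorem card_sub_card_constIndices_le [Fintype ι] [Nonempty α] [Fintype β] (f : ι → α → β) :
    card β - #(constIndices f) ≤ #(uncertifiedValues f) := by
  classical
  obtain ⟨s⟩ := ‹Nonempty α›
  have hsub : (uncertifiedValues f)ᶜ ⊆ (constIndices f).image (f · s) := by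
    intro j hj
    rw [mem_compl, mem_uncertifiedValues, not_not] at hj
    obtain ⟨i, hi⟩ := hj
    exact mem_image.2 ⟨i, mem_constIndices.2 ⟨j, hi⟩, hi s⟩
  have hcard := (card_le_card hsub).trans card_image_le
  rw [card_compl] at hcard
  omega

theorem stmt7_general [Fintype ι] [Fintype α] [Fintype β] (hαι : card α ≤ card ι)
    (hαβ : card α ≤ card β) (hf : PreservesSurjective f)
    (hcert : ¬ ∀ j, ∃ i, ∀ s, f i s = j) :
    ∀ i, ¬ ∃ c, ∀ s, f i s = c := by
  classical
  intro i hi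
  obtain ⟨j₀, hj₀⟩ := not_forall.1 hcert
  obtain ⟨s, -⟩ := not_forall.1 (not_exists.1 hj₀ i)
  have : Nonempty α := ⟨s⟩
  obtain ⟨j, hj, hle⟩ := exists_card_mul_card_levelSet_le ⟨j₀, mem_uncertifiedValues.2 hj₀⟩
  have hlt := hf.card_compl_constIndices_mul_lt hαι ⟨i, mem_constIndices.2 hi⟩
    (mem_uncertifiedValues.1 hj)
  refine (hlt.trans_le ?_).not_ge hle
  gcongr
  exact (Nat.sub_le_sub_right hαβ _).trans (card_sub_card_constIndices_le f)

end Polymorphism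

/-- for an arity-1 polymorphism of `Surj_{m,n}` with `m > n ≥ 3`, if not every
category is represented by a constant function among the `f_i`, then no `f_i` is constant. -/
theorem stmt7 (m n : ℕ) (hn : 3 ≤ n) (hmn : n < m)
    (f : Fin m → Fin n → Fin n)
    (hpoly : ∀ x : Fin m → Fin n, Function.Surjective x →
      Function.Surjective (fun i => f i (x i)))
    (hnotcert : ¬ ∀ j : Fin n, ∃ i : Fin m, ∀ s : Fin n, f i s = j) :
    ∀ i : Fin m, ¬ ∃ c : Fin n, ∀ s : Fin n, f i s = c :=
  stmt7_general (by simpa only [Fintype.card_fin] using hmn.le) le_rfl hpoly hnotcert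
end
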